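/- arXiv:1908.08826 — 2 statements merged into one kernel-verified Lean document; each statement's English description precedes it below -/
import Mathlib

section
/- Suppose H ≤ G are groups of type VFP, H has finite index in G, and both have well-defined Euler characteristics. Then χ(H) = [G : H] · χ(G). -/
open CategoryTheory

noncomputable def trivialZMod (G : Type) [Group G] : ModuleCat (MonoidAlgebra ℤ G) :=
  (Rep.equivalenceModuleMonoidAlgebra.functor.obj (Rep.trivial ℤ G ℤ))

def TypeFP (G : Type) [Group G] : Prop :=
  ∃ (P : ProjectiveResolution (trivialZMod G)) (n : ℕ),
    (∀ i, Module.Finite (MonoidAlgebra ℤ G) (P.complex.X i)) ∧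
    ∀ i, n < i → Subsingleton (P.complex.X i)

def TypeVFP (G : Type) [Group G] : Prop :=
  ∃ K : Subgroup G, K.index ≠ 0 ∧ TypeFP K

/-- `HasFreeResOfRanks G n r`: the trivial `ℤG`-module `ℤ` admits a free resolution of
length `≤ n` in which the `i`-th module is free of finite rank `r i`. -/
def HasFreeResOfRanks (G : Type) [Group G] (n : ℕ) (r : ℕ → ℕ) : Prop :=
  ∃ P : ProjectiveResolution (trivialZMod G),
    (∀ i, Nonempty ((P.complex.X i) ≃ₗ[MonoidAlgebra ℤ G]
      (Fin (r i) →₀ MonoidAlgebra ℤ G))) ∧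
    ∀ i, n < i → r i = 0

/-- `EulerCharRel G q` asserts that the Euler characteristic of the type-`VFP` group `G`
(in the sense of Brown) equals the rational number `q`: some finite-index subgroup `K`
has a finite free resolution of the trivial module, and `q` is the alternating sum of
the ranks divided by the index `[G : K]`. -/
def EulerCharRel (G : Type) [Group G] (q : ℚ) : Prop :=
  ∃ (K : Subgroup G) (n : ℕ) (r : ℕ → ℕ), K.index ≠ 0 ∧
    HasFreeResOfRanks K n r ∧
    q = (∑ i ∈ Finset.range (n + 1), (-1 : ℚ) ^ i * r i) / K.index

/-!
By Schanuel's lemma, the alternating sum of the ranks in a finite free resolution of an `R`-module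
depends only on the module, as soon as `R` has invariant basis number; the group ring `ℤ[G]` does,
because it maps onto `ℤ`. A coset decomposition makes `ℤ[K]` free of rank `[K : L]` over `ℤ[L]`,
so restricting a finite free resolution of `ℤ` from `K` to a subgroup `L` of finite index multiplies
every rank by `[K : L]`. Two subgroups of finite index, one in `H` and one in `G`, are then compared
through their intersection.
-/

universe u v

section Schanuel

variable {R : Type*} [Ring R] {P Q M : Type*} [AddCommGroup P] [Module R P] [AddCommGroup Q]
  [Module R Q] [AddCommGroup M] [Module R M]

theorem nonempty_ker_prod_linearEquiv_ker_prod [Module.Projective R P] [Module.Projective R Q]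
    (p : P →ₗ[R] M) (q : Q →ₗ[R] M) (hp : Function.Surjective p) (hq : Function.Surjective q) :
    Nonempty ((LinearMap.ker p × Q) ≃ₗ[R] (LinearMap.ker q × P)) := by
  obtain ⟨s, hs⟩ := Module.projective_lifting_property q p hq
  obtain ⟨t, ht⟩ := Module.projective_lifting_property p q hp
  replace hs : ∀ x, q (s x) = p x := LinearMap.congr_fun hs
  replace ht : ∀ y, p (t y) = q y := LinearMap.congr_fun ht
  -- Both sides are the fibre product of `p` and `q`, through `(x, y) ↦ (x + t y, y)` and
  -- `(y, x) ↦ (x, y + s x)`.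
  refine ⟨
    { toFun := fun z => (⟨z.2 - s (z.1 + t z.2), by simp [hs, ht]⟩, z.1 + t z.2)
      invFun := fun z => (⟨z.2 - t (z.1 + s z.2), by simp [hs, ht]⟩, z.1 + s z.2)
      map_add' := fun x y => ?_
      map_smul' := fun r x => ?_
      left_inv := fun x => ?_
      right_inv := fun x => ?_ }⟩
  all_goals refine Prod.ext (Subtype.ext ?_) ?_
  all_goals simp [smul_sub] <;> abel

/-- The kernel of `f` does not change when the same summand `T` is added to source and target. -/
def kerProdMapIdEquiv (f : P →ₗ[R] M) (T : Type*) [AddCommGroup T] [Module R T] :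
    LinearMap.ker (f.prodMap (LinearMap.id : T →ₗ[R] T)) ≃ₗ[R] LinearMap.ker f where
  toFun z := ⟨z.1.1, congrArg Prod.fst z.2⟩
  invFun x := ⟨(x, 0), by simp⟩
  map_add' _ _ := rfl
  map_smul' _ _ := rfl
  left_inv z := Subtype.ext (Prod.ext rfl (congrArg Prod.snd z.2).symm)
  right_inv _ := rfl

end Schanuel

/-- `HasEulerChar R n M χ`: the `R`-module `M` has a resolution of length less than `n` by free
modules of finite rank, and `χ` is the alternating sum of the ranks. The resolution is built one
syzygy module at a time. -/
def HasEulerChar (R : Type u) [Ring R] :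
    ℕ → (M : Type u) → [AddCommGroup M] → [Module R M] → ℤ → Prop
  | 0, M, _, _, χ => Subsingleton M ∧ χ = 0
  | n + 1, M, _, _, χ => ∃ (a : ℕ) (f : (Fin a → R) →ₗ[R] M),
      Function.Surjective f ∧ HasEulerChar R n (LinearMap.ker f) (a - χ)

namespace HasEulerChar

variable {R : Type u} [Ring R] {n m : ℕ} {M N : Type u} [AddCommGroup M] [Module R M]
  [AddCommGroup N] [Module R N] {χ χ' : ℤ}

theorem of_linearEquiv (h : HasEulerChar R n M χ) (e : M ≃ₗ[R] N) : HasEulerChar R n N χ := by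
  cases n with
  | zero => exact ⟨have := h.1; e.symm.injective.subsingleton, h.2⟩
  | succ n =>
    obtain ⟨a, f, hf, h⟩ := h
    exact ⟨a, e.toLinearMap ∘ₗ f, e.surjective.comp hf, by rwa [LinearEquiv.ker_comp]⟩

theorem mono (hnm : n ≤ m) (h : HasEulerChar R n M χ) : HasEulerChar R m M χ := by
  induction m generalizing n M χ with
  | zero => rwa [Nat.le_zero.1 hnm] at h
  | succ m ih =>
    cases n with
    | zero =>
      obtain ⟨hM, rfl⟩ := h
      exact ⟨0, 0, fun x => ⟨0, Subsingleton.elim _ _⟩,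
        ih m.zero_le ⟨inferInstance, by simp⟩⟩
    | succ n =>
      obtain ⟨a, f, hf, h⟩ := h
      exact ⟨a, f, hf, ih (Nat.succ_le_succ_iff.1 hnm) h⟩

theorem of_surjective {ι F : Type*} [Fintype ι] [AddCommGroup F] [Module R F]
    (b : Module.Basis ι R F) (f : F →ₗ[R] M) (hf : Function.Surjective f)
    {K : Type u} [AddCommGroup K] [Module R K] (e : K ≃ₗ[R] LinearMap.ker f)
    (h : HasEulerChar R n K χ) : HasEulerChar R (n + 1) M (Fintype.card ι - χ) := by
  let c := (b.reindex (Fintype.equivFin ι)).equivFun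
  refine ⟨Fintype.card ι, f ∘ₗ c.symm.toLinearMap, hf.comp c.symm.surjective, ?_⟩
  rw [sub_sub_cancel]
  refine h.of_linearEquiv (e ≪≫ₗ c.ofSubmodules _ _ ?_)
  rw [LinearMap.ker_comp, Submodule.map_equiv_eq_comap_symm]

theorem of_exact (n : ℕ) (X : ℕ → Type u) [∀ i, AddCommGroup (X i)] [∀ i, Module R (X i)]
    (d : ∀ i, X (i + 1) →ₗ[R] X i) (ε : X 0 →ₗ[R] M)
    (hd : ∀ i, Function.Exact (d (i + 1)) (d i)) (hε : Function.Exact (d 0) ε)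
    (hsurj : Function.Surjective ε) (r : ℕ → ℕ) (b : ∀ i, Module.Basis (Fin (r i)) R (X i))
    (hr : ∀ i, n ≤ i → r i = 0) :
    HasEulerChar R n M (∑ i ∈ Finset.range n, (-1) ^ i * (r i : ℤ)) := by
  induction n generalizing X M r with
  | zero =>
    have : IsEmpty (Fin (r 0)) := by rw [hr 0 le_rfl]; infer_instance
    have : Subsingleton (X 0) := (b 0).repr.injective.subsingleton
    exact ⟨hsurj.subsingleton, Finset.sum_range_zero _⟩
  | succ n ih =>
    have syzygy := ih (fun i => X (i + 1)) (fun i => d (i + 1))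
      ((d 0).codRestrict (LinearMap.ker ε) hε.apply_apply_eq_zero) (fun i => hd (i + 1))
      (fun x => Subtype.ext_iff.trans (hd 0 x))
      (fun ⟨x, hx⟩ => ((hε x).1 hx).imp fun y hy => Subtype.ext hy)
      (fun i => r (i + 1)) (fun i => b (i + 1)) (fun i hi => hr (i + 1) (Nat.succ_le_succ hi))
    convert of_surjective (b 0) ε hsurj (LinearEquiv.refl R _) syzygy using 1
    simp [Finset.sum_range_succ', pow_succ, sub_eq_neg_add]

theorem add_card_eq_add_card [InvariantBasisNumber R] {ι κ : Type v} [Fintype ι] [Fintype κ]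
    (hM : HasEulerChar R n M χ) (hN : HasEulerChar R n N χ')
    (e : (M × (ι → R)) ≃ₗ[R] (N × (κ → R))) :
    χ + Fintype.card ι = χ' + Fintype.card κ := by
  induction n generalizing ι κ M N χ χ' with
  | zero =>
    obtain ⟨_, rfl⟩ := hM
    obtain ⟨_, rfl⟩ := hN
    let := uniqueOfSubsingleton (0 : M)
    let := uniqueOfSubsingleton (0 : N)
    rw [card_eq_of_linearEquiv R
      (LinearEquiv.uniqueProd.symm ≪≫ₗ e ≪≫ₗ LinearEquiv.uniqueProd : (ι → R) ≃ₗ[R] (κ → R))]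
  | succ n ih =>
    obtain ⟨a, f, hf, hM⟩ := hM
    obtain ⟨b, g, hg, hN⟩ := hN
    let f' := f.prodMap (LinearMap.id : (ι → R) →ₗ[R] _)
    let g' := g.prodMap (LinearMap.id : (κ → R) →ₗ[R] _)
    obtain ⟨u⟩ := nonempty_ker_prod_linearEquiv_ker_prod (e.toLinearMap ∘ₗ f') g'
      (e.surjective.comp (hf.prodMap Function.surjective_id))
      (hg.prodMap Function.surjective_id)
    rw [LinearEquiv.ker_comp] at u
    have syzygies := ih hM hN <|
      ((kerProdMapIdEquiv f _).symm.prodCongr (LinearEquiv.sumArrowLequivProdArrow _ κ R R)) ≪≫ₗ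
        u ≪≫ₗ
          ((kerProdMapIdEquiv g _).prodCongr (LinearEquiv.sumArrowLequivProdArrow _ ι R R).symm)
    simp only [Fintype.card_sum, Fintype.card_fin, Nat.cast_add] at syzygies
    linarith

theorem unique [InvariantBasisNumber R] (h : HasEulerChar R n M χ) (h' : HasEulerChar R m M χ') :
    χ = χ' := by
  simpa using (h.mono (le_max_left n m)).add_card_eq_add_card (h'.mono (le_max_right n m))
    (LinearEquiv.refl R (M × (Fin 0 → R)))

theorem restrictScalars {S : Type u} [Ring S] [Module R S] [IsScalarTower R S S] [Module S M]
    [IsScalarTower R S M] {ι : Type*} [Fintype ι] (b : Module.Basis ι R S)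
    (h : HasEulerChar S n M χ) :
    HasEulerChar R n M (Fintype.card ι * χ) := by
  induction n generalizing M χ with
  | zero =>
    obtain ⟨hM, rfl⟩ := h
    exact ⟨hM, mul_zero _⟩
  | succ n ih =>
    obtain ⟨a, f, hf, h⟩ := h
    convert of_surjective (b.smulTower (Pi.basisFun S (Fin a))) (f.restrictScalars R) hf
      (LinearEquiv.refl R (LinearMap.ker f)) (ih h) using 1
    simp only [Fintype.card_prod, Fintype.card_fin, Nat.cast_mul]
    ring

end HasEulerChar

theorem invariantBasisNumber_of_ringHom {R S : Type*} [Semiring R] [Semiring S]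
    [InvariantBasisNumber S] (f : R →+* S) : InvariantBasisNumber R :=
  invariantBasisNumber_iff_matrix.2 fun n m A B hAB hBA =>
    invariantBasisNumber_iff_matrix.1 inferInstance n m (A.map f) (B.map f)
      (by rw [← Matrix.map_mul, hAB, Matrix.map_one _ (map_zero f) (map_one f)])
      (by rw [← Matrix.map_mul, hBA, Matrix.map_one _ (map_zero f) (map_one f)])

section MonoidAlgebra

open MonoidAlgebra

variable {k : Type*} [Semiring k] {G L K : Type*} [Group L] [Group K]

instance invariantBasisNumber_monoidAlgebra [Monoid G] [InvariantBasisNumber k] :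
    InvariantBasisNumber (MonoidAlgebra k G) :=
  invariantBasisNumber_of_ringHom
    (liftNCRingHom (RingHom.id k) (1 : G →* k) fun _ _ => .one_right _)

/-- An additive equivalence of `k[G]`-modules is `k[G]`-linear once it commutes with the action of
the monomials. -/
def linearEquivOfMapSingleSMul [Monoid G] {M N : Type*} [AddCommMonoid M]
    [Module (MonoidAlgebra k G) M] [AddCommMonoid N] [Module (MonoidAlgebra k G) N] (e : M ≃+ N)
    (he : ∀ (g : G) (c : k) (x : M), e (single g c • x) = single g c • e x) :
    M ≃ₗ[MonoidAlgebra k G] N where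
  __ := e
  map_smul' r x := by
    change e (r • x) = r • e x
    induction r using MonoidAlgebra.induction_linear with
    | zero => simp
    | add r s hr hs => simp only [add_smul, map_add, hr, hs]
    | single g c => exact he g c x

/-- If `φ : L → K` is injective and `T` is a set of representatives for the right cosets of its
image, then `k[K]` is free over `k[L]`, with basis indexed by `T`. -/
noncomputable def basisOfIsComplement {φ : L →* K} (hφ : Function.Injective φ) {T : Set K}
    (hT : Subgroup.IsComplement (φ.range : Set K) T) :
    letI := Module.compHom (MonoidAlgebra k K) (mapDomainRingHom k φ)
    Module.Basis T (MonoidAlgebra k L) (MonoidAlgebra k K) :=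
  letI := Module.compHom (MonoidAlgebra k K) (mapDomainRingHom k φ)
  let κ : T × L ≃ K := (Equiv.prodComm _ _).trans
    (((MonoidHom.ofInjective hφ).toEquiv.prodCongr (Equiv.refl T)).trans hT.equiv.symm)
  let E : (T →₀ MonoidAlgebra k L) ≃+ MonoidAlgebra k K :=
    (Finsupp.mapRange.addEquiv coeffAddEquiv).trans <|
      (Finsupp.curryAddEquiv).symm.trans <|
        (Finsupp.domCongr κ).trans coeffAddEquiv.symm
  have hE (t : T) (l : L) (c : k) : E (Finsupp.single t (single l c)) = single (φ l * t) c := by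
    have hκ : φ l * t = κ (t, l) := rfl
    simp [E, hκ]
  .ofRepr <| LinearEquiv.symm <| linearEquivOfMapSingleSMul E fun g c x => by
    change E (single g c • x) = mapDomainRingHom k φ (single g c) * E x
    induction x using Finsupp.induction_linear with
    | zero => simp
    | add x y hx hy => simp only [smul_add, mul_add, map_add, hx, hy]
    | single t y =>
      induction y using MonoidAlgebra.induction_linear with
      | zero => simp
      | add x y hx hy => simp only [Finsupp.single_add, smul_add, mul_add, map_add, hx, hy]
      | single l d => simp [hE, single_mul_single, mul_assoc]

end MonoidAlgebra

section TrivialModule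

variable {G L K : Type} [Group G] [Group L] [Group K]

theorem trivialZMod_single_smul (g : G) (c : ℤ) (x : trivialZMod G) :
    MonoidAlgebra.single g c • x = c • x := by
  let ρ := Representation.trivial ℤ G ℤ
  apply ρ.asModuleEquiv.injective
  calc ρ.asModuleEquiv (MonoidAlgebra.single g c • x)
    _ = ρ.asAlgebraHom (MonoidAlgebra.single g c) (ρ.asModuleEquiv x) :=
      ρ.asModuleEquiv_map_smul _ x
    _ = c • ρ.asModuleEquiv x := by simp only [Representation.asAlgebraHom_single, ρ,
          Representation.isTrivial_def, LinearMap.smul_apply, LinearMap.id_apply]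
    _ = ρ.asModuleEquiv (c • x) := (map_zsmul ρ.asModuleEquiv c x).symm

/-- The trivial module of `K` restricted along `φ : L → K` is the trivial module of `L`. -/
noncomputable def trivialZModCompHomEquiv (φ : L →* K) :
    letI := Module.compHom (trivialZMod K) (MonoidAlgebra.mapDomainRingHom ℤ φ)
    trivialZMod K ≃ₗ[MonoidAlgebra ℤ L] trivialZMod L :=
  letI := Module.compHom (trivialZMod K) (MonoidAlgebra.mapDomainRingHom ℤ φ)
  let e : trivialZMod K ≃+ trivialZMod L :=
    (Representation.trivial ℤ K ℤ).asModuleEquiv.toAddEquiv.trans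
      (Representation.trivial ℤ L ℤ).asModuleEquiv.toAddEquiv.symm
  linearEquivOfMapSingleSMul e fun l c x => by
    change e (MonoidAlgebra.mapDomainRingHom ℤ φ (MonoidAlgebra.single l c) • x) = _
    simp [trivialZMod_single_smul]

theorem HasEulerChar.restrict {φ : L →* K} (hφ : Function.Injective φ) (hidx : φ.range.index ≠ 0)
    {n : ℕ} {χ : ℤ} (h : HasEulerChar (MonoidAlgebra ℤ K) n (trivialZMod K) χ) :
    HasEulerChar (MonoidAlgebra ℤ L) n (trivialZMod L) (φ.range.index * χ) := by
  obtain ⟨T, hT, -⟩ := φ.range.exists_isComplement_right 1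
  have : Finite T := Nat.finite_of_card_ne_zero (hT.card_right ▸ hidx)
  have := Fintype.ofFinite T
  let := Module.compHom (MonoidAlgebra ℤ K) (MonoidAlgebra.mapDomainRingHom ℤ φ)
  let := Module.compHom (trivialZMod K) (MonoidAlgebra.mapDomainRingHom ℤ φ)
  have : IsScalarTower (MonoidAlgebra ℤ L) (MonoidAlgebra ℤ K) (MonoidAlgebra ℤ K) :=
    ⟨fun r s x => mul_assoc (MonoidAlgebra.mapDomainRingHom ℤ φ r) s x⟩
  have : IsScalarTower (MonoidAlgebra ℤ L) (MonoidAlgebra ℤ K) (trivialZMod K) :=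
    ⟨fun r s x => mul_smul (MonoidAlgebra.mapDomainRingHom ℤ φ r) s x⟩
  rw [← hT.card_right, Nat.card_eq_fintype_card]
  exact (h.restrictScalars (basisOfIsComplement hφ hT)).of_linearEquiv (trivialZModCompHomEquiv φ)

end TrivialModule

theorem HasFreeResOfRanks.hasEulerChar {G : Type} [Group G] {n : ℕ} {r : ℕ → ℕ}
    (h : HasFreeResOfRanks G n r) :
    HasEulerChar (MonoidAlgebra ℤ G) (n + 1) (trivialZMod G)
      (∑ i ∈ Finset.range (n + 1), (-1) ^ i * (r i : ℤ)) := by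
  obtain ⟨P, hP, hr⟩ := h
  exact .of_exact (n + 1) (fun i => P.complex.X i) (fun i => (P.complex.d (i + 1) i).hom)
    (P.π.f 0).hom
    (fun i => (ShortComplex.ShortExact.moduleCat_exact_iff_function_exact _).1 (P.exact_succ i))
    ((ShortComplex.ShortExact.moduleCat_exact_iff_function_exact _).1 P.exact₀)
    ((ModuleCat.epi_iff_surjective (P.π.f 0)).1 inferInstance) r
    (fun i => .ofRepr (hP i).some) hr

theorem HasFreeResOfRanks.index_mul_sum_eq {L K₁ K₂ : Type} [Group L] [Group K₁] [Group K₂]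
    {φ₁ : L →* K₁} {φ₂ : L →* K₂} (hφ₁ : Function.Injective φ₁) (hφ₂ : Function.Injective φ₂)
    (hidx₁ : φ₁.range.index ≠ 0) (hidx₂ : φ₂.range.index ≠ 0) {n₁ n₂ : ℕ} {r₁ r₂ : ℕ → ℕ}
    (h₁ : HasFreeResOfRanks K₁ n₁ r₁) (h₂ : HasFreeResOfRanks K₂ n₂ r₂) :
    (φ₁.range.index : ℚ) * ∑ i ∈ Finset.range (n₁ + 1), (-1 : ℚ) ^ i * r₁ i =
      φ₂.range.index * ∑ i ∈ Finset.range (n₂ + 1), (-1 : ℚ) ^ i * r₂ i := by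
  exact_mod_cast (h₁.hasEulerChar.restrict hφ₁ hidx₁).unique (h₂.hasEulerChar.restrict hφ₂ hidx₂)

theorem index_range_comp {L K G : Type*} [Group L] [Group K] [Group G] {g : K →* G}
    (hg : Function.Injective g) (f : L →* K) :
    (g.comp f).range.index = f.range.index * g.range.index := by
  rw [← MonoidHom.map_range, Subgroup.index_map_of_injective _ hg]

theorem index_range_subgroupComap_mul_index {K G : Type*} [Group K] [Group G] {g : K →* G}
    (hg : Function.Injective g) (N : Subgroup G) :
    (g.subgroupComap N).range.index * N.index = (N.comap g).index * g.range.index := by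
  have h : N.subtype.comp (g.subgroupComap N) = g.comp (N.comap g).subtype := rfl
  simpa only [index_range_comp N.subtype_injective, index_range_comp hg, Subgroup.range_subtype]
    using congrArg (fun f => f.range.index) h

theorem HasFreeResOfRanks.sum_eq_index_mul {K G : Type} [Group K] [Group G] {g : K →* G}
    (hg : Function.Injective g) (hidx : g.range.index ≠ 0) {n : ℕ} {r : ℕ → ℕ} {q : ℚ}
    (hK : HasFreeResOfRanks K n r) (hG : EulerCharRel G q) :
    ∑ i ∈ Finset.range (n + 1), (-1 : ℚ) ^ i * r i = g.range.index * q := by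
  obtain ⟨N, m, s, hN, hs, rfl⟩ := hG
  have hcomap : (N.comap g).index ≠ 0 := by
    have : N.FiniteIndex := ⟨hN⟩
    rw [Subgroup.index_comap]
    exact Subgroup.FiniteIndex.index_ne_zero (H := N.subgroupOf g.range)
  have tower := index_range_subgroupComap_mul_index hg N
  have hφ : Function.Injective (g.subgroupComap N) := fun x y hxy =>
    Subtype.ext (hg (congrArg N.subtype hxy))
  have ranks := hK.index_mul_sum_eq (N.comap g).subtype_injective hφ
    (by rwa [Subgroup.range_subtype])
    (left_ne_zero_of_mul (tower ▸ mul_ne_zero hcomap hidx)) hs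
  rw [Subgroup.range_subtype] at ranks
  have tower' := congrArg (Nat.cast : ℕ → ℚ) tower
  push_cast at tower'
  rw [← mul_div_assoc, eq_div_iff (Nat.cast_ne_zero.2 hN)]
  apply mul_left_cancel₀ (Nat.cast_ne_zero.2 hcomap : ((N.comap g).index : ℚ) ≠ 0)
  linear_combination N.index * ranks +
    (∑ i ∈ Finset.range (m + 1), (-1 : ℚ) ^ i * s i) * tower'

/-- If `H ≤ G` are groups of type `VFP` with `H` of finite index in `G`, and both have
Euler characteristics `a` and `b` respectively, then `χ(H) = [G : H] · χ(G)`. -/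
theorem eulerChar_finiteIndex (G : Type) [Group G] (H : Subgroup G)
    (hidx : H.index ≠ 0) (hG : TypeVFP G) (hH : TypeVFP H)
    (a b : ℚ) (ha : EulerCharRel H a) (hb : EulerCharRel G b) :
    a = (H.index : ℚ) * b := by
  obtain ⟨K, n, r, hK, hr, rfl⟩ := ha
  have hindex : (H.subtype.comp K.subtype).range.index = K.index * H.index := by
    rw [index_range_comp H.subtype_injective, Subgroup.range_subtype, Subgroup.range_subtype]
  have hsum := hr.sum_eq_index_mul (g := H.subtype.comp K.subtype)
    (H.subtype_injective.comp K.subtype_injective) (hindex ▸ mul_ne_zero hK hidx) hb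
  rw [div_eq_iff (Nat.cast_ne_zero.2 hK), hsum, hindex]
  push_cast
  ring
end

section
/- Let H ≤ G be groups of type VFP with χ(H) ≠ 0, and suppose G = A *_C B is a reduced amalgam (i.e., [A:C] ≥ 2 and [B:C] ≥ 2) where A, B, C each contain H as a subgroup of finite index. Then χ(G)/χ(H) ≤ 0, and χ(G) = 0 if and only if [A:C] = [B:C] = 2. In fact χ(G) = (χ(H)/[C:H])·(1/[A:C] + 1/[B:C] − 1). -/
open CategoryTheory

/-- `G`, together with `iA`, `iB`, is the amalgamated free product `A *_C B` along the
injections `f : C → A` and `g : C → B` (i.e. the pushout of groups). -/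
def IsAmalgamatedProduct {C A B G : Type} [Group C] [Group A] [Group B] [Group G]
    (f : C →* A) (g : C →* B) (iA : A →* G) (iB : B →* G) : Prop :=
  iA.comp f = iB.comp g ∧
  ∀ (K : Type) (_ : Group K) (kA : A →* K) (kB : B →* K),
    kA.comp f = kB.comp g → ∃! k : G →* K, k.comp iA = kA ∧ k.comp iB = kB

/-!
Measure a finitely generated projective `ℚ[G]`-module by the Kaplansky trace (the coefficient at
`1`) of its Hattori–Stallings rank. Since the trace is commutative, Schanuel's lemma makes the
alternating sum of the ranks of a finite projective resolution of `ℚ` independent of the resolution,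
and it agrees with `χ(G)`. Restriction to `Λ ≤ Γ` of finite index multiplies it by the index, and
induction from `Λ` to `Γ` preserves it; averaging over `Γ ⧸ Λ` makes `ℚ` a direct summand of
`ℚ[Γ ⧸ Λ]`, so that `ℚ` has a finite resolution over `ℚ[Γ]` as soon as it has one over `ℚ[Λ]`.

For `G = A *_C B`, the sequence `0 → ℚ[G ⧸ C] → ℚ[G ⧸ A] × ℚ[G ⧸ B] → ℚ → 0`, which is the chain
complex of the Bass–Serre tree, gives `χ(G) = χ(A) + χ(B) - χ(C)`. It is split exact over `ℚ`: the
chain of edges on the path from the vertex `B` to the vertex `xB` is a cocycle `D : G → ℚ[G ⧸ C]`,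
which exists because a cocycle on an amalgam may be prescribed on the two factors, and `D` provides
the contraction.
-/

universe u v

section ShortExact

variable {R : Type u} [Ring R] {K M N P Q : Type*} [AddCommGroup K] [Module R K]
  [AddCommGroup M] [Module R M] [AddCommGroup N] [Module R N] [AddCommGroup P] [Module R P]
  [AddCommGroup Q] [Module R Q]

/-- `0 → K → M → N → 0` is a short exact sequence of modules. -/
structure IsShortExact (i : K →ₗ[R] M) (p : M →ₗ[R] N) : Prop where
  injective : Function.Injective i
  surjective : Function.Surjective p
  exact : Function.Exact i p

theorem isShortExact_ker_subtype {p : M →ₗ[R] N} (hp : Function.Surjective p) :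
    IsShortExact (LinearMap.ker p).subtype p :=
  ⟨Submodule.injective_subtype _, hp, LinearMap.exact_subtype_ker_map p⟩

theorem isShortExact_inl_snd :
    IsShortExact (LinearMap.inl R K N) (LinearMap.snd R K N) :=
  ⟨LinearMap.inl_injective, Prod.snd_surjective, Function.Exact.inl_snd⟩

theorem IsShortExact.exists_linearEquiv_prod [Module.Projective R N] {i : K →ₗ[R] M}
    {p : M →ₗ[R] N} (h : IsShortExact i p) :
    ∃ e : M ≃ₗ[R] K × N, ∀ x, e (i x) = (x, 0) := by
  obtain ⟨s, hs⟩ := Module.projective_lifting_property p LinearMap.id h.surjective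
  have hsplit := h.exact.split_tfae h.injective h.surjective
  obtain ⟨e, he, -⟩ := (hsplit.out 0 2).1 (Exists.intro s hs)
  exact ⟨e, fun x => by simp [he]⟩

theorem isShortExact_ker_comp {π : P →ₗ[R] M} {p : M →ₗ[R] N} (hπ : Function.Surjective π) :
    IsShortExact (Submodule.inclusion (LinearMap.ker_le_ker_comp π p))
      (π.restrict (p := LinearMap.ker (p ∘ₗ π)) (q := LinearMap.ker p) fun _ hx => hx) where
  injective := Submodule.inclusion_injective _
  surjective := fun ⟨y, hy⟩ => by
    obtain ⟨x, rfl⟩ := hπ y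
    exact ⟨⟨x, hy⟩, rfl⟩
  exact := fun ⟨x, hx⟩ => by
    refine ⟨fun h => ⟨⟨x, congrArg Subtype.val h⟩, rfl⟩, ?_⟩
    rintro ⟨⟨z, hz⟩, hzx⟩
    obtain rfl : z = x := congrArg Subtype.val hzx
    exact Subtype.ext hz

theorem isShortExact_ker_coprod {f : M →ₗ[R] N} {π : P →ₗ[R] N} (hπ : Function.Surjective π) :
    IsShortExact
      ((LinearMap.inr R M P).restrict (p := LinearMap.ker π) (q := LinearMap.ker (f.coprod π))
        fun x hx => by simpa using hx)
      (LinearMap.fst R M P ∘ₗ (LinearMap.ker (f.coprod π)).subtype) where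
  injective := fun x y hxy => Subtype.ext (congrArg (fun t => t.1.2) hxy)
  surjective := fun x => by
    obtain ⟨y, hy⟩ := hπ (-f x)
    exact ⟨⟨(x, y), by simp [hy]⟩, rfl⟩
  exact := fun ⟨⟨x, y⟩, hxy⟩ => by
    constructor
    · rintro (rfl : x = 0)
      exact ⟨⟨y, by simpa using hxy⟩, rfl⟩
    · rintro ⟨z, hz⟩
      exact (congrArg (fun t => t.1.1) hz).symm

theorem IsShortExact.surjective_coprod {i : K →ₗ[R] M} {p : M →ₗ[R] N} (h : IsShortExact i p)
    {u : P →ₗ[R] K} {w : Q →ₗ[R] M} (hu : Function.Surjective u)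
    (hw : Function.Surjective (p ∘ₗ w)) : Function.Surjective ((i ∘ₗ u).coprod w) := fun m => by
  obtain ⟨y, hy⟩ := hw (p m)
  obtain ⟨z, hz⟩ := (h.exact (m - w y)).1 (by simpa [sub_eq_zero] using hy.symm)
  obtain ⟨x, rfl⟩ := hu z
  exact ⟨(x, y), by simp [hz]⟩

theorem IsShortExact.ker_coprod {i : K →ₗ[R] M} {p : M →ₗ[R] N} (h : IsShortExact i p)
    {u : P →ₗ[R] K} {w : Q →ₗ[R] M} (hu : Function.Surjective u) :
    IsShortExact
      ((LinearMap.inl R P Q).restrict (p := LinearMap.ker u)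
        (q := LinearMap.ker ((i ∘ₗ u).coprod w)) fun x hx => by simp_all)
      ((LinearMap.snd R P Q).restrict (p := LinearMap.ker ((i ∘ₗ u).coprod w))
        (q := LinearMap.ker (p ∘ₗ w)) fun x hx => by
          simpa [h.exact.apply_apply_eq_zero] using congrArg p (LinearMap.mem_ker.1 hx)) where
  injective := fun x y hxy => Subtype.ext (congrArg (fun t => t.1.1) hxy)
  surjective := fun ⟨y, hy⟩ => by
    obtain ⟨z, hz⟩ := (h.exact (w y)).1 hy
    obtain ⟨x, hx⟩ := hu (-z)
    exact ⟨⟨(x, y), by simp [hx, hz]⟩, rfl⟩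
  exact := fun ⟨⟨x, y⟩, hxy⟩ => by
    constructor
    · intro hy
      obtain rfl : y = 0 := congrArg Subtype.val hy
      exact ⟨⟨x, h.injective (by simpa using hxy)⟩, rfl⟩
    · rintro ⟨z, hz⟩
      exact Subtype.ext (congrArg (fun t => t.1.2) hz).symm

end ShortExact

section Rank

variable {R : Type u} [Ring R] {T : Type*} [AddCommGroup T]

/-- The Hattori–Stallings rank: `M` is finitely generated projective, and `q` is its rank with
respect to the additive map `τ`, read off a finite dual basis of `M`. It is well defined as soon
as `τ (a * b) = τ (b * a)`. -/
def HasRank (τ : R →+ T) (M : Type*) [AddCommGroup M] [Module R M] (q : T) : Prop :=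
  ∃ (n : ℕ) (x : Fin n → M) (f : Fin n → M →ₗ[R] R),
    (∀ m, ∑ i, f i m • x i = m) ∧ q = ∑ i, τ (f i (x i))

variable {τ : R →+ T} {K M N : Type*} [AddCommGroup K] [Module R K] [AddCommGroup M]
  [Module R M] [AddCommGroup N] [Module R N]

theorem HasRank.of_dualBasis {ι : Type*} [Fintype ι] (x : ι → M) (f : ι → M →ₗ[R] R)
    (h : ∀ m, ∑ i, f i m • x i = m) : HasRank τ M (∑ i, τ (f i (x i))) := by
  let e := Fintype.equivFin ι
  refine ⟨Fintype.card ι, x ∘ e.symm, f ∘ e.symm, fun m => ?_, ?_⟩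
  · exact (e.symm.sum_comp fun i => f i m • x i).trans (h m)
  · exact (e.symm.sum_comp fun i => τ (f i (x i))).symm

theorem HasRank.unique (hτ : ∀ a b, τ (a * b) = τ (b * a)) {p q : T}
    (hp : HasRank τ M p) (hq : HasRank τ M q) : p = q := by
  obtain ⟨m, x, f, hf, rfl⟩ := hp
  obtain ⟨n, y, g, hg, rfl⟩ := hq
  calc ∑ i, τ (f i (x i)) = ∑ i, ∑ j, τ (g j (x i) * f i (y j)) :=
        Finset.sum_congr rfl fun i _ => by
          conv_lhs => rw [← hg (x i)]
          simp only [map_sum, map_smul, smul_eq_mul]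
    _ = ∑ j, ∑ i, τ (f i (y j) * g j (x i)) := by
          rw [Finset.sum_comm]
          simp only [hτ]
    _ = ∑ j, τ (g j (y j)) := Finset.sum_congr rfl fun j _ => by
          conv_rhs => rw [← hf (y j)]
          simp only [map_sum, map_smul, smul_eq_mul]

theorem HasRank.congr {q : T} (h : HasRank τ M q) (e : M ≃ₗ[R] N) : HasRank τ N q := by
  obtain ⟨n, x, f, hf, rfl⟩ := h
  refine ⟨n, fun i => e (x i), fun i => f i ∘ₗ e.symm.toLinearMap, fun m => ?_, by simp⟩
  apply e.symm.injective
  simpa using hf (e.symm m)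

theorem HasRank.zero [Subsingleton M] : HasRank τ M 0 :=
  ⟨0, Fin.elim0, Fin.elim0, fun _ => Subsingleton.elim _ _, by simp⟩

theorem HasRank.free (k : ℕ) : HasRank τ (Fin k → R) (k • τ 1) := by
  refine ⟨k, fun i => Pi.single i 1, LinearMap.proj, fun m => ?_, by simp⟩
  simpa [← Pi.single_smul] using Finset.univ_sum_single m

theorem HasRank.prod {k n : T} (hk : HasRank τ K k) (hn : HasRank τ N n) :
    HasRank τ (K × N) (k + n) := by
  obtain ⟨a, x, f, hf, rfl⟩ := hk
  obtain ⟨b, y, g, hg, rfl⟩ := hn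
  convert HasRank.of_dualBasis (τ := τ)
    (Sum.elim (fun i => LinearMap.inl R K N (x i)) fun j => LinearMap.inr R K N (y j))
    (Sum.elim (fun i => f i ∘ₗ LinearMap.fst R K N) fun j => g j ∘ₗ LinearMap.snd R K N)
    fun m => ?_
  · simp
  · simp [Prod.ext_iff, Prod.fst_sum, Prod.snd_sum, hf, hg]

theorem HasRank.projective {q : T} (h : HasRank τ M q) : Module.Projective R M := by
  obtain ⟨n, x, f, hf, -⟩ := h
  exact .of_split (LinearMap.pi f) (Fintype.linearCombination R x) (LinearMap.ext hf)

theorem HasRank.exists_free_cover {q : T} (h : HasRank τ M q) :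
    ∃ (k : ℕ) (p : (Fin k → R) →ₗ[R] M), Function.Surjective p := by
  obtain ⟨n, x, f, hf, -⟩ := h
  exact ⟨n, Fintype.linearCombination R x, fun m => ⟨fun i => f i m, hf m⟩⟩

theorem HasRank.of_isShortExact {k n : T} (hk : HasRank τ K k) (hn : HasRank τ N n)
    {i : K →ₗ[R] M} {p : M →ₗ[R] N} (h : IsShortExact i p) : HasRank τ M (k + n) := by
  have := hn.projective
  obtain ⟨e, -⟩ := h.exists_linearEquiv_prod
  exact (hk.prod hn).congr e.symm

theorem HasRank.of_retract {m : T} (hm : HasRank τ M m) (i : K →ₗ[R] M) (r : M →ₗ[R] K)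
    (h : ∀ x, r (i x) = x) : ∃ k, HasRank τ K k := by
  obtain ⟨n, x, f, hf, rfl⟩ := hm
  refine ⟨_, n, fun a => r (x a), fun a => f a ∘ₗ i, fun m => ?_, rfl⟩
  simpa [h] using congrArg r (hf (i m))

theorem HasRank.of_isShortExact_left (hτ : ∀ a b, τ (a * b) = τ (b * a)) {m n : T}
    (hm : HasRank τ M m) (hn : HasRank τ N n) {i : K →ₗ[R] M} {p : M →ₗ[R] N}
    (h : IsShortExact i p) : HasRank τ K (m - n) := by
  have := hn.projective
  obtain ⟨e, he⟩ := h.exists_linearEquiv_prod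
  obtain ⟨k, hk⟩ := hm.of_retract i (LinearMap.fst R K N ∘ₗ e.toLinearMap) fun x => by simp [he]
  rwa [hm.unique hτ (hk.of_isShortExact hn h), add_sub_cancel_right]

end Rank

section EulerChar

variable {R : Type u} [Ring R] {T : Type*} [AddCommGroup T]

/-- `M` has a resolution of length at most `n` by finitely generated projective modules, and `q`
is the alternating sum of their ranks with respect to `τ`. -/
def HasChi (τ : R →+ T) : ℕ → (M : Type u) → [AddCommGroup M] → [Module R M] → T → Prop
  | 0, M, _, _, q => HasRank τ M q
  | n + 1, M, _, _, q => ∃ (P : Type u) (_ : AddCommGroup P) (_ : Module R P) (p : P →ₗ[R] M)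
      (a : T), Function.Surjective p ∧ HasRank τ P a ∧ HasChi τ n (LinearMap.ker p) (a - q)

variable {τ : R →+ T} {K M N : Type u} [AddCommGroup K] [Module R K] [AddCommGroup M]
  [Module R M] [AddCommGroup N] [Module R N]

theorem HasChi.congr {n : ℕ} {q : T} (h : HasChi τ n M q) (e : M ≃ₗ[R] N) :
    HasChi τ n N q := by
  cases n with
  | zero => exact HasRank.congr h e
  | succ n =>
    obtain ⟨P, _, _, p, a, hp, hP, h⟩ := h
    refine ⟨P, _, _, e.toLinearMap ∘ₗ p, a, e.surjective.comp hp, hP, ?_⟩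
    rwa [LinearEquiv.ker_comp]

theorem HasChi.succ {n : ℕ} {q : T} (h : HasChi τ n M q) : HasChi τ (n + 1) M q := by
  induction n generalizing M q with
  | zero =>
    have : Subsingleton (LinearMap.ker (LinearMap.id : M →ₗ[R] M)) := by
      rw [LinearMap.ker_id]
      infer_instance
    refine ⟨M, _, _, LinearMap.id, q, Function.surjective_id, h, ?_⟩
    rw [sub_self]
    exact HasRank.zero
  | succ n ih =>
    obtain ⟨P, _, _, p, a, hp, hP, h⟩ := h
    exact ⟨P, _, _, p, a, hp, hP, ih h⟩

theorem HasChi.mono {m n : ℕ} (hmn : m ≤ n) {q : T} (h : HasChi τ m M q) : HasChi τ n M q :=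
  Nat.le_induction h (fun _ _ h => h.succ) n hmn

theorem HasRank.hasChi {q : T} (h : HasRank τ M q) (n : ℕ) : HasChi τ n M q :=
  HasChi.mono (m := 0) n.zero_le h

theorem HasChi.of_isShortExact {n : ℕ} {a b : T} (hk : HasChi τ n K a) (hn : HasChi τ n N b)
    {i : K →ₗ[R] M} {p : M →ₗ[R] N} (h : IsShortExact i p) : HasChi τ n M (a + b) := by
  induction n generalizing K M N a b with
  | zero => exact HasRank.of_isShortExact hk hn h
  | succ n ih =>
    obtain ⟨P, _, _, u, c, hu, hP, hk⟩ := hk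
    obtain ⟨Q, _, _, v, d, hv, hQ, hn⟩ := hn
    have := hQ.projective
    obtain ⟨w, rfl⟩ := Module.projective_lifting_property p v h.surjective
    refine ⟨P × Q, _, _, (i ∘ₗ u).coprod w, c + d, h.surjective_coprod hu hv, hP.prod hQ, ?_⟩
    rw [add_sub_add_comm]
    exact ih hk hn (h.ker_coprod hu)

theorem HasChi.prod {n : ℕ} {a b : T} (hk : HasChi τ n K a) (hn : HasChi τ n N b) :
    HasChi τ n (K × N) (a + b) :=
  hk.of_isShortExact hn isShortExact_inl_snd

theorem HasChi.unique (hτ : ∀ a b, τ (a * b) = τ (b * a)) {m n : ℕ} {a b : T}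
    (ha : HasChi τ m M a) (hb : HasChi τ n M b) : a = b := by
  wlog hmn : m = n generalizing m n
  · exact this (ha.mono (le_max_left m n)) (hb.mono (le_max_right m n)) rfl
  subst hmn
  induction m generalizing M a b with
  | zero => exact HasRank.unique hτ ha hb
  | succ n ih =>
    obtain ⟨P, _, _, p, c, hp, hP, hKp⟩ := ha
    obtain ⟨Q, _, _, q, d, hq, hQ, hKq⟩ := hb
    -- Schanuel's lemma: the pullback of `p` and `-q` is an extension of `P` by `ker q`, and,
    -- up to swapping the factors, of `Q` by `ker p`.
    have hswap : LinearMap.ker (q.coprod p) =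
        (LinearMap.ker (p.coprod q)).comap (LinearEquiv.prodComm R Q P).toLinearMap := by
      ext x
      simp [add_comm]
    have hleft := hKq.of_isShortExact (hP.hasChi n) (isShortExact_ker_coprod (f := p) hq)
    have hright := hKp.of_isShortExact (hQ.hasChi n) (isShortExact_ker_coprod (f := q) hp)
    rw [hswap] at hright
    have heq : d - b + c = c - a + d :=
      ih hleft (hright.congr ((LinearEquiv.prodComm R Q P).ofSubmodule' _))
    rw [sub_add_eq_add_sub, sub_add_eq_add_sub, add_comm d, sub_right_inj] at heq
    exact heq.symm

theorem HasChi.of_retract {n : ℕ} {q : T} (hM : HasChi τ n M q) (i : K →ₗ[R] M)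
    (r : M →ₗ[R] K) (h : ∀ x, r (i x) = x) : ∃ q', HasChi τ n K q' := by
  induction n generalizing K M q with
  | zero => exact HasRank.of_retract hM i r h
  | succ n ih =>
    obtain ⟨P, _, _, p, a, hp, hP, hKp⟩ := hM
    have hE := hKp.of_isShortExact (hP.hasChi n)
      (isShortExact_ker_coprod (f := i ∘ₗ r ∘ₗ p) hp)
    obtain ⟨q', hq'⟩ := ih hE
      ((LinearMap.inl R P P).restrict (p := LinearMap.ker (r ∘ₗ p)) fun x hx => by simp_all)
      ((LinearMap.fst R P P + LinearMap.snd R P P).restrict fun x hx => by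
        simpa [h] using congrArg r (LinearMap.mem_ker.1 hx))
      fun x => Subtype.ext (add_zero x.1)
    exact ⟨a - q', P, _, _, r ∘ₗ p, a, (Function.LeftInverse.surjective h).comp hp, hP,
      by rwa [sub_sub_cancel]⟩

theorem HasChi.exists_free_cover (hτ : ∀ a b, τ (a * b) = τ (b * a)) {n : ℕ} {q : T}
    (h : HasChi τ (n + 1) M q) : ∃ (k : ℕ) (p : (Fin k → R) →ₗ[R] M),
      Function.Surjective p ∧ HasChi τ n (LinearMap.ker p) (k • τ 1 - q) := by
  obtain ⟨P, _, _, p, a, hp, hP, hKp⟩ := h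
  obtain ⟨k, π, hπ⟩ := hP.exists_free_cover
  refine ⟨k, p ∘ₗ π, hp.comp hπ, ?_⟩
  have hKπ := (HasRank.free k).of_isShortExact_left hτ hP (isShortExact_ker_subtype hπ)
  simpa using (hKπ.hasChi n).of_isShortExact hKp (isShortExact_ker_comp hπ)

end EulerChar

section BaseChange

variable {S : Type u} {R : Type v} [Ring S] [Ring R] {φ : S →+* R} {I : Type*} {κ : I → Type*}
  [∀ i, Fintype (κ i)] {b : ∀ i, κ i → R}

/-- Every finite subset of `R` lies in the right `S`-submodule generated by one of the finite
families `b i`. Together with the independence required in `IsExtension`, this replaces flatness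
of the right `S`-module `R`. -/
def IsRightCover (φ : S →+* R) (b : ∀ i, κ i → R) : Prop :=
  ∀ A : Finset R, ∃ i, ∀ a ∈ A, ∃ c : κ i → S, a = ∑ k, b i k * φ (c k)

/-- `ι : M → N` exhibits `N` as the extension of scalars of `M` along `φ : S → R`, when the
families `b i` cover `R` in the sense of `IsRightCover`: `N` is spanned by the image of `M`, and
each family `b i` is independent over `M`. -/
structure IsExtension (b : ∀ i, κ i → R) {M N : Type*} [AddCommGroup M] [Module S M]
    [AddCommGroup N] [Module R N] (ι : M →ₛₗ[φ] N) : Prop where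
  span_range : Submodule.span R (Set.range ι) = ⊤
  eq_zero : ∀ i (m : κ i → M), ∑ k, b i k • ι (m k) = 0 → m = 0

variable {M N Q : Type*} [AddCommGroup M] [Module S M] [AddCommGroup N] [Module R N]
  [AddCommGroup Q] [Module R Q]

theorem IsRightCover.exists_sum_eq (hc : IsRightCover φ b) (ψ : M →ₛₗ[φ] Q) {y : Q}
    (hy : y ∈ Submodule.span R (Set.range ψ)) :
    ∃ i, ∃ m : κ i → M, y = ∑ k, b i k • ψ (m k) := by
  obtain ⟨x, rfl⟩ := Finsupp.mem_span_range_iff_exists_finsupp.1 hy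
  classical
  obtain ⟨i, hi⟩ := hc (x.support.image x)
  choose! c hc using fun m (hm : m ∈ x.support) => hi (x m) (Finset.mem_image_of_mem x hm)
  refine ⟨i, fun k => ∑ m ∈ x.support, c m k • m, ?_⟩
  calc x.sum (fun m a => a • ψ m)
      = ∑ m ∈ x.support, ∑ k, (b i k * φ (c m k)) • ψ m :=
        Finset.sum_congr rfl fun m hm => by
          simp only [← Finset.sum_smul, ← hc m hm]
    _ = ∑ k, b i k • ψ (∑ m ∈ x.support, c m k • m) := by
        rw [Finset.sum_comm]
        simp only [map_sum, LinearMap.map_smulₛₗ, Finset.smul_sum, mul_smul]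

variable {ι : M →ₛₗ[φ] N}

theorem IsExtension.exists_extend (hc : IsRightCover φ b) (h : IsExtension b ι)
    (f : M →ₛₗ[φ] Q) : ∃ g : N →ₗ[R] Q, ∀ m, g (ι m) = f m := by
  let graph : M →ₛₗ[φ] N × Q :=
    { toFun := fun m => (ι m, f m)
      map_add' := by simp
      map_smul' := by simp }
  let Γ := Submodule.span R (Set.range graph)
  have hinj : Function.Injective (LinearMap.fst R N Q ∘ₗ Γ.subtype) := by
    rw [injective_iff_map_eq_zero]
    rintro ⟨y, hy⟩ hy0
    obtain ⟨i, m, rfl⟩ := hc.exists_sum_eq graph hy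
    obtain rfl : m = 0 := h.eq_zero i m (by simpa [graph, Prod.fst_sum] using hy0)
    simp
  have hsurj : Function.Surjective (LinearMap.fst R N Q ∘ₗ Γ.subtype) := by
    rw [← LinearMap.range_eq_top, LinearMap.range_comp, Submodule.range_subtype,
      Submodule.map_span, ← Set.range_comp]
    exact h.span_range
  let e := LinearEquiv.ofBijective _ ⟨hinj, hsurj⟩
  refine ⟨LinearMap.snd R N Q ∘ₗ Γ.subtype ∘ₗ e.symm.toLinearMap, fun m => ?_⟩
  have hm : e.symm (ι m) = ⟨graph m, Submodule.subset_span ⟨m, rfl⟩⟩ :=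
    e.symm_apply_eq.2 rfl
  simp [hm, graph]

/-- The entrywise application of `φ` to vectors, the extension of scalars of free modules. -/
@[simps]
def mapVector (φ : S →+* R) (α : Type*) : (α → S) →ₛₗ[φ] (α → R) where
  toFun x a := φ (x a)
  map_add' _ _ := funext fun _ => map_add φ _ _
  map_smul' _ _ := funext fun _ => map_mul φ _ _

theorem isExtension_mapVector (h : IsExtension b φ.toSemilinearMap) (α : Type*) [Finite α] :
    IsExtension b (mapVector φ α) where
  span_range := by
    classical
    cases nonempty_fintype α
    refine eq_top_iff.2 fun y _ => ?_
    rw [pi_eq_sum_univ y]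
    refine Submodule.sum_mem _ fun a _ => Submodule.smul_mem _ _ (Submodule.subset_span ?_)
    exact ⟨Pi.single a 1, funext fun j => by simp [Pi.single_apply, eq_comm]⟩
  eq_zero i m hm := funext fun k => funext fun a =>
    congrFun (h.eq_zero i (fun k => m k a) (by simpa using congrFun hm a)) k

variable {P P' : Type*} [AddCommGroup P] [Module S P] [AddCommGroup P'] [Module R P']

theorem IsExtension.ker (hc : IsRightCover φ b) {j : P →ₛₗ[φ] P'} (hj : IsExtension b j)
    (h : IsExtension b ι) {p : P →ₗ[S] M} {p' : P' →ₗ[R] N} (hp : ∀ x, p' (j x) = ι (p x)) :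
    IsExtension b (j.restrict (p := LinearMap.ker p) (q := LinearMap.ker p')
      fun x hx => by simp_all) where
  span_range := by
    refine eq_top_iff.2 fun ⟨y, hy⟩ _ => ?_
    obtain ⟨i, m, rfl⟩ := hc.exists_sum_eq j (hj.span_range ▸ Submodule.mem_top (x := y))
    have hm : ∀ k, p (m k) = 0 := congrFun (h.eq_zero i (fun k => p (m k)) (by simpa [hp] using hy))
    have hsum : (⟨∑ k, b i k • j (m k), hy⟩ : LinearMap.ker p') =
        ∑ k, b i k • ⟨j (m k), by simp [hp, hm]⟩ := Subtype.ext (by simp)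
    rw [hsum]
    exact Submodule.sum_mem _ fun k _ =>
      Submodule.smul_mem _ _ (Submodule.subset_span ⟨⟨m k, hm k⟩, rfl⟩)
  eq_zero i m hm := funext fun k => Subtype.ext <|
    congrFun (hj.eq_zero i (fun k => m k) (by simpa using congrArg Subtype.val hm)) k

variable {T : Type*} [AddCommGroup T] {σ : S →+ T} {τ : R →+ T}

theorem HasRank.baseChange (hc : IsRightCover φ b) (hστ : ∀ s, τ (φ s) = σ s) {q : T}
    (hM : HasRank σ M q) (h : IsExtension b ι) : HasRank τ N q := by
  obtain ⟨n, x, f, hf, rfl⟩ := hM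
  choose g hg using fun i => h.exists_extend hc (φ.toSemilinearMap.comp (f i))
  refine ⟨n, fun i => ι (x i), g, fun y => ?_, by simp [hg, hστ]⟩
  have hid : (∑ i, (g i).smulRight (ι (x i)) : N →ₗ[R] N) = LinearMap.id := by
    refine LinearMap.ext_on_range h.span_range fun m => ?_
    conv_rhs => rw [← hf m]
    simp [hg]
  simpa using LinearMap.congr_fun hid y

theorem HasChi.baseChange (hσ : ∀ a b, σ (a * b) = σ (b * a)) (hc : IsRightCover φ b)
    (hφ : IsExtension b φ.toSemilinearMap) (hστ : ∀ s, τ (φ s) = σ s) {M : Type u} {N : Type v}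
    [AddCommGroup M] [Module S M] [AddCommGroup N] [Module R N] {ι : M →ₛₗ[φ] N} {n : ℕ} {q : T}
    (hM : HasChi σ n M q) (h : IsExtension b ι) : HasChi τ n N q := by
  induction n generalizing M N q with
  | zero => exact HasRank.baseChange hc hστ hM h
  | succ n ih =>
    obtain ⟨k, p, hp, hK⟩ := hM.exists_free_cover hσ
    have hj := isExtension_mapVector hφ (Fin k)
    obtain ⟨p', hp'⟩ := hj.exists_extend hc (ι.comp p)
    refine ⟨Fin k → R, _, _, p', k • τ 1, ?_, HasRank.free k, ?_⟩
    · rw [← LinearMap.range_eq_top, eq_top_iff, ← h.span_range, Submodule.span_le]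
      rintro _ ⟨m, rfl⟩
      obtain ⟨x, rfl⟩ := hp m
      exact ⟨_, hp' x⟩
    · rw [← φ.map_one, hστ]
      exact ih hK (hj.ker hc h hp')

end BaseChange

section Restriction

variable {T : Type*} [AddCommGroup T]

/-- `R` is free as a left `S`-module with basis `b` and coordinates `c`, and the trace `τ` on `R`
is recovered from the trace `σ` on `S` in each coordinate. -/
structure IsTracedBasis {S R : Type*} [Ring S] [Ring R] (φ : S →+* R) (σ : S →+ T)
    (τ : R →+ T) {κ : Type*} [Fintype κ] (b : κ → R) (c : κ → R →+ S) : Prop where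
  map_mul : ∀ k s r, c k (φ s * r) = s * c k r
  sum_eq : ∀ r, ∑ k, φ (c k r) * b k = r
  trace_eq : ∀ k r, σ (c k (b k * r)) = τ r

variable {κ : Type*} [Fintype κ] {q : T}

theorem HasRank.restrict {S R : Type*} [Ring S] [Ring R] {φ : S →+* R} {σ : S →+ T} {τ : R →+ T}
    {b : κ → R} {c : κ → R →+ S} {M : Type*} [AddCommGroup M] [Module R M] [Module S M]
    (hb : IsTracedBasis φ σ τ b c) (h : ∀ (s : S) (m : M), s • m = φ s • m)
    (hM : HasRank τ M q) : HasRank σ M (Fintype.card κ • q) := by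
  obtain ⟨n, x, f, hf, rfl⟩ := hM
  convert HasRank.of_dualBasis (τ := σ) (fun i : κ × Fin n => b i.1 • x i.2)
    (fun i =>
      { toFun := fun m => c i.1 (f i.2 m)
        map_add' := by simp
        map_smul' := fun s m => by simp [h, hb.map_mul] }) fun m => ?_
  · simp [Fintype.sum_prod_type, hb.trace_eq]
  · calc ∑ i : κ × Fin n, c i.1 (f i.2 m) • b i.1 • x i.2
        = ∑ j, (∑ k, φ (c k (f j m)) * b k) • x j := by
          simp only [Fintype.sum_prod_type_right, h, ← mul_smul, Finset.sum_smul]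
      _ = m := by simp only [hb.sum_eq, hf]

theorem HasChi.restrict {S R : Type u} [Ring S] [Ring R] {φ : S →+* R} {σ : S →+ T} {τ : R →+ T}
    {b : κ → R} {c : κ → R →+ S} {M : Type u} [AddCommGroup M] [Module R M] [Module S M]
    (hb : IsTracedBasis φ σ τ b c) (h : ∀ (s : S) (m : M), s • m = φ s • m) {n : ℕ}
    (hM : HasChi τ n M q) : HasChi σ n M (Fintype.card κ • q) := by
  induction n generalizing M q with
  | zero => exact HasRank.restrict hb h hM
  | succ n ih =>
    obtain ⟨P, _, _, p, a, hp, hP, hK⟩ := hM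
    let : Module S P := Module.compHom P φ
    let : Module S (LinearMap.ker p) := Module.compHom _ φ
    let pS : P →ₗ[S] M :=
      { p.toAddMonoidHom with
        map_smul' := fun s x => (p.map_smul (φ s) x).trans (h s (p x)).symm }
    refine ⟨P, _, _, pS, _, hp, hP.restrict hb fun _ _ => rfl, ?_⟩
    rw [← nsmul_sub]
    exact (ih (fun _ _ => rfl) hK).congr
      { AddEquiv.refl (LinearMap.ker p) with map_smul' := fun _ _ => rfl }

end Restriction

section GroupRing

variable {k T : Type*} [CommRing k] [AddCommGroup T]

/-- The Kaplansky trace of a group ring: the coefficient at the identity, with values in `T`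
through `c`. -/
def kaplanskyTrace (c : k →+ T) (G : Type*) [Group G] : MonoidAlgebra k G →+ T where
  toFun x := c (x.coeff 1)
  map_zero' := by simp
  map_add' := by simp

theorem kaplanskyTrace_apply (c : k →+ T) {G : Type*} [Group G] (x : MonoidAlgebra k G) :
    kaplanskyTrace c G x = c (x.coeff 1) := rfl

theorem kaplanskyTrace_mul_comm (c : k →+ T) {G : Type*} [Group G] (x y : MonoidAlgebra k G) :
    kaplanskyTrace c G (x * y) = kaplanskyTrace c G (y * x) := by
  induction x using MonoidAlgebra.induction_linear with
  | zero => simp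
  | add x x' hx hx' => simp only [add_mul, mul_add, map_add, hx, hx']
  | single g r =>
    rw [kaplanskyTrace_apply, kaplanskyTrace_apply, MonoidAlgebra.coeff_single_mul_apply,
      MonoidAlgebra.coeff_mul_single_apply, mul_one, one_mul, mul_comm]

/-- An additive map between modules over group rings that is compatible with the action of the
elements `a • g` is semilinear. -/
def semilinearOfSingle {R G M N : Type*} [Group G] [Ring R] (φ : MonoidAlgebra k G →+* R)
    [AddCommGroup M] [Module (MonoidAlgebra k G) M] [AddCommGroup N] [Module R N] (ι : M →+ N)
    (h : ∀ g a m, ι (MonoidAlgebra.single g a • m) = φ (MonoidAlgebra.single g a) • ι m) :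
    M →ₛₗ[φ] N :=
  { ι with
    map_smul' := fun s m => by
      induction s using MonoidAlgebra.induction_linear with
      | zero => simp
      | add x y hx hy => simp_all [add_smul]
      | single g a => exact h g a m }

variable {Λ Γ : Type*} [Group Λ] [Group Γ] {j : Λ →* Γ}

theorem coeff_mapDomainRingHom_map (hj : Function.Injective j) (x : MonoidAlgebra k Λ) (l : Λ) :
    (MonoidAlgebra.mapDomainRingHom k j x).coeff (j l) = x.coeff l :=
  Finsupp.mapDomain_apply hj _ _

theorem coeff_mapDomainRingHom_of_notMem (x : MonoidAlgebra k Λ) {g : Γ} (hg : g ∉ j.range) :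
    (MonoidAlgebra.mapDomainRingHom k j x).coeff g = 0 :=
  Finsupp.mapDomain_of_notMem_range _ _ hg

theorem kaplanskyTrace_mapDomainRingHom (hj : Function.Injective j) (c : k →+ T)
    (x : MonoidAlgebra k Λ) :
    kaplanskyTrace c Γ (MonoidAlgebra.mapDomainRingHom k j x) = kaplanskyTrace c Λ x := by
  rw [kaplanskyTrace_apply, kaplanskyTrace_apply, ← map_one j, coeff_mapDomainRingHom_map hj]

theorem out_inv_mul_mem_range_iff (t : Γ ⧸ j.range) (g : Γ) :
    t.out⁻¹ * g ∈ j.range ↔ t = g := by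
  rw [← QuotientGroup.eq, QuotientGroup.out_eq']

theorem isTracedBasis_mapDomainRingHom (hj : Function.Injective j) [Fintype (Γ ⧸ j.range)]
    (c : k →+ T) :
    IsTracedBasis (MonoidAlgebra.mapDomainRingHom k j) (kaplanskyTrace c Λ) (kaplanskyTrace c Γ)
      (fun t : Γ ⧸ j.range => MonoidAlgebra.single t.out⁻¹ (1 : k))
      (fun t => MonoidAlgebra.comapDomainAddMonoidHom (fun l => j l * t.out⁻¹)
        ((mul_left_injective _).comp hj)) where
  map_mul t s r := by
    induction s using MonoidAlgebra.induction_linear with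
    | zero => simp
    | add x y hx hy => simp only [map_add, add_mul, hx, hy]
    | single l a =>
      ext l'
      simp [MonoidAlgebra.coeff_single_mul_apply, mul_assoc]
  sum_eq r := by
    ext g
    have hmem := out_inv_mul_mem_range_iff (j := j) (g := g⁻¹)
    rw [MonoidAlgebra.coeff_sum, Finsupp.finsetSum_apply,
      Finset.sum_eq_single_of_mem _ (Finset.mem_univ ((g⁻¹ : Γ) : Γ ⧸ j.range))]
    · obtain ⟨l, hl⟩ := (hmem _).2 rfl
      have hg : g * ((g⁻¹ : Γ) : Γ ⧸ j.range).out = j l⁻¹ := by simp [hl]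
      rw [MonoidAlgebra.coeff_mul_single_apply, inv_inv, mul_one, hg,
        coeff_mapDomainRingHom_map hj]
      simp [← hg]
    · intro t _ ht
      rw [MonoidAlgebra.coeff_mul_single_apply, inv_inv, coeff_mapDomainRingHom_of_notMem, zero_mul]
      exact fun h => ht ((hmem t).1 (by simpa using inv_mem h))
  trace_eq t r := by
    simp [kaplanskyTrace_apply, MonoidAlgebra.coeff_single_mul_apply]

theorem exists_eq_out_mul (g : Γ) : ∃ l, g = (g : Γ ⧸ j.range).out * j l := by
  obtain ⟨l, hl⟩ := (out_inv_mul_mem_range_iff (g : Γ ⧸ j.range) g).2 rfl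
  exact ⟨l, by rw [hl, mul_inv_cancel_left]⟩

theorem mk_out_mul (t : Γ ⧸ j.range) (l : Λ) : ((t.out * j l : Γ) : Γ ⧸ j.range) = t :=
  ((out_inv_mul_mem_range_iff t _).1 (by simp)).symm

theorem coeff_single_out_mul (hj : Function.Injective j) (s t : Γ ⧸ j.range)
    [Decidable (s = t)] (x : MonoidAlgebra k Λ) (l : Λ) :
    (MonoidAlgebra.single s.out 1 * MonoidAlgebra.mapDomainRingHom k j x).coeff (t.out * j l) =
      if s = t then x.coeff l else 0 := by
  rw [MonoidAlgebra.coeff_single_mul_apply, one_mul]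
  split_ifs with h
  · rw [h, inv_mul_cancel_left, coeff_mapDomainRingHom_map hj]
  · refine coeff_mapDomainRingHom_of_notMem _ fun hmem => h ?_
    rw [(out_inv_mul_mem_range_iff s _).1 hmem, mk_out_mul]

/-- The finite families of representatives of left cosets of the range of `j` in the group
ring. -/
noncomputable def cosetFamily (k : Type*) [CommRing k] (j : Λ →* Γ)
    (A : Finset (Γ ⧸ j.range)) (t : A) : MonoidAlgebra k Γ :=
  MonoidAlgebra.single t.1.out 1

theorem isRightCover_cosetFamily (hj : Function.Injective j) :
    IsRightCover (MonoidAlgebra.mapDomainRingHom k j) (cosetFamily k j) := by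
  classical
  intro A
  let B := A.biUnion fun a => a.coeff.support.image (QuotientGroup.mk (s := j.range))
  refine ⟨B, fun a ha => ⟨fun t => MonoidAlgebra.comapDomain (fun l => t.1.out * j l)
    ((mul_right_injective _).comp hj) a, ?_⟩⟩
  ext g
  obtain ⟨l, hl⟩ := exists_eq_out_mul (j := j) g
  have hB : (g : Γ ⧸ j.range) ∉ B → a.coeff g = 0 := fun h => by
    by_contra hg
    exact h (Finset.mem_biUnion.2
      ⟨a, ha, Finset.mem_image_of_mem _ (Finsupp.mem_support_iff.2 hg)⟩)
  calc a.coeff g = if (g : Γ ⧸ j.range) ∈ B then a.coeff g else 0 := by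
        split_ifs with h
        exacts [rfl, hB h]
    _ = ∑ t : B, if t.1 = g then a.coeff (t.1.out * j l) else 0 := by
        rw [Finset.sum_coe_sort B fun t => if t = g then a.coeff (t.out * j l) else 0,
          Finset.sum_ite_eq', ← hl]
    _ = _ := by
        conv_rhs => rw [hl]
        simp only [cosetFamily, MonoidAlgebra.coeff_sum, Finsupp.finsetSum_apply,
          coeff_single_out_mul hj, MonoidAlgebra.coeff_comapDomain, Finsupp.comapDomain_apply]

theorem isExtension_mapDomainRingHom (hj : Function.Injective j) :
    IsExtension (cosetFamily k j) (MonoidAlgebra.mapDomainRingHom k j).toSemilinearMap where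
  span_range := (Ideal.eq_top_iff_one _).2
    (Submodule.subset_span ⟨1, map_one (MonoidAlgebra.mapDomainRingHom k j)⟩)
  eq_zero A m hm := by
    classical
    ext t l
    have h := congrArg (fun x => x.coeff (t.1.out * j l)) hm
    simpa [cosetFamily, coeff_single_out_mul hj, -MonoidAlgebra.mapDomainRingHom_apply] using h

end GroupRing

/-- The trivial module `k` over the group ring `k[G]`. -/
abbrev TrivialModule (k G : Type*) [CommRing k] [Group G] : Type _ :=
  (Representation.trivial k G k).asModule

theorem single_smul_trivialModule {k G : Type*} [CommRing k] [Group G] (g : G) (a : k)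
    (m : TrivialModule k G) : MonoidAlgebra.single g a • m = a • m :=
  Representation.single_smul _ a g m

section FractionRing

variable {k : Type*} [CommRing k] {K : Type*} [CommRing K] [Algebra k K] {G : Type*} [Group G]

theorem exists_mapRingHom_eq {R S : Type*} [Semiring R] [Semiring S] {f : R →+* S}
    (hf : Function.Injective f) {x : MonoidAlgebra S G} (hx : ∀ g, x.coeff g ∈ f.rangeS) :
    ∃ y, MonoidAlgebra.mapRingHom G f y = x := by
  choose y hy using hx
  have hy0 : ∀ g, y g ≠ 0 → g ∈ x.coeff.support := fun g hg =>
    Finsupp.mem_support_iff.2 (by rwa [← hy, map_ne_zero_iff f hf])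
  exact ⟨.ofCoeff (Finsupp.onFinset _ y hy0), by ext g; simp [hy]⟩

variable [IsFractionRing k K]

variable (k K G) in
/-- The one-element families consisting of the inverse of a denominator in the group ring. -/
noncomputable def denominatorFamily (d : nonZeroDivisors k) (_ : Unit) : MonoidAlgebra K G :=
  MonoidAlgebra.single 1 (IsLocalization.mk' K 1 d)

theorem single_mul_denominatorFamily (d : nonZeroDivisors k) (u : Unit) :
    MonoidAlgebra.single 1 (algebraMap k K d) * denominatorFamily k K G d u = 1 := by
  rw [denominatorFamily, MonoidAlgebra.single_mul_single, one_mul, IsLocalization.mk'_spec',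
    map_one, MonoidAlgebra.one_def]

theorem denominatorFamily_mul_single (d : nonZeroDivisors k) (u : Unit) :
    denominatorFamily k K G d u * MonoidAlgebra.single 1 (algebraMap k K d) = 1 := by
  rw [denominatorFamily, MonoidAlgebra.single_mul_single, one_mul, IsLocalization.mk'_spec,
    map_one, MonoidAlgebra.one_def]

theorem isRightCover_denominatorFamily :
    IsRightCover (MonoidAlgebra.mapRingHom G (algebraMap k K)) (denominatorFamily k K G) := by
  classical
  intro A
  obtain ⟨d, hd⟩ := IsLocalization.exist_integer_multiples_of_finset (nonZeroDivisors k)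
    (A.biUnion fun a => a.coeff.support.image a.coeff)
  refine ⟨d, fun a ha => ?_⟩
  obtain ⟨y, hy⟩ := exists_mapRingHom_eq (x := MonoidAlgebra.single 1 (algebraMap k K d) * a)
    (IsFractionRing.injective k K) fun g => by
      rw [MonoidAlgebra.coeff_single_mul_apply, inv_one, one_mul, ← Algebra.smul_def]
      by_cases hg : a.coeff g = 0
      · simp [hg]
      · exact hd _ (Finset.mem_biUnion.2
          ⟨a, ha, Finset.mem_image_of_mem _ (Finsupp.mem_support_iff.2 hg)⟩)
  refine ⟨fun _ => y, ?_⟩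
  rw [Fintype.sum_unique, hy, ← mul_assoc, denominatorFamily_mul_single, one_mul]

theorem isExtension_denominatorFamily {M N : Type*} [AddCommGroup M] [Module (MonoidAlgebra k G) M]
    [AddCommGroup N] [Module (MonoidAlgebra K G) N]
    {ι : M →ₛₗ[MonoidAlgebra.mapRingHom G (algebraMap k K)] N} (hinj : Function.Injective ι)
    (hN : ∀ n, ∃ d m, n = denominatorFamily k K G d () • ι m) :
    IsExtension (denominatorFamily k K G) ι where
  span_range := by
    refine eq_top_iff.2 fun n _ => ?_
    obtain ⟨d, m, rfl⟩ := hN n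
    exact Submodule.smul_mem _ _ (Submodule.subset_span ⟨m, rfl⟩)
  eq_zero d m hm := by
    funext u
    rw [Fintype.sum_unique] at hm
    have h := congrArg (MonoidAlgebra.single (1 : G) (algebraMap k K d) • ·) hm
    simp only [← mul_smul, single_mul_denominatorFamily, one_smul, smul_zero] at h
    exact hinj (h.trans (map_zero ι).symm)

theorem isExtension_mapRingHom :
    IsExtension (denominatorFamily k K G)
      (MonoidAlgebra.mapRingHom G (algebraMap k K)).toSemilinearMap :=
  isExtension_denominatorFamily
    (MonoidAlgebra.map_injective _ (IsFractionRing.injective k K)) fun n => by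
      obtain ⟨d, hd⟩ := isRightCover_denominatorFamily (k := k) {n}
      obtain ⟨c, hc⟩ := hd n (Finset.mem_singleton_self n)
      exact ⟨d, c (), by rwa [Fintype.sum_unique] at hc⟩

variable (k K G) in
/-- The inclusion of the trivial module `k` into the trivial module `K`. -/
noncomputable def trivialAlgebraMap :
    TrivialModule k G →ₛₗ[MonoidAlgebra.mapRingHom G (algebraMap k K)] TrivialModule K G :=
  semilinearOfSingle _ (algebraMap k K).toAddMonoidHom fun g a m => by
    rw [MonoidAlgebra.mapRingHom_single, single_smul_trivialModule, single_smul_trivialModule]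
    exact map_mul (algebraMap k K) a m

theorem isExtension_trivialAlgebraMap :
    IsExtension (denominatorFamily k K G) (trivialAlgebraMap k K G) :=
  isExtension_denominatorFamily (IsFractionRing.injective k K) fun n => by
    obtain ⟨m, d, rfl⟩ := IsLocalization.exists_mk'_eq (nonZeroDivisors k) (S := K) n
    refine ⟨d, m, ?_⟩
    rw [denominatorFamily, single_smul_trivialModule, IsLocalization.mk'_eq_mul_mk'_one, mul_comm]
    rfl

end FractionRing

section Resolution

theorem sum_range_succ_neg_one_pow_smul {T : Type*} [AddCommGroup T] (a : ℕ → T) (m : ℕ) :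
    ∑ i ∈ Finset.range (m + 1), (-1 : ℤ) ^ i • a i =
      a 0 - ∑ i ∈ Finset.range m, (-1 : ℤ) ^ i • a (i + 1) := by
  simp [Finset.sum_range_succ', pow_succ, sub_eq_neg_add]

variable {R : Type u} [Ring R] {T : Type*} [AddCommGroup T] {τ : R →+ T}

theorem HasChi.range_of_exact {X : ℕ → Type u} [∀ i, AddCommGroup (X i)] [∀ i, Module R (X i)]
    {a : ℕ → T} (hX : ∀ i, HasRank τ (X i) (a i)) (d : ∀ i, X (i + 1) →ₗ[R] X i)
    (hd : ∀ i, Function.Exact (d (i + 1)) (d i)) (m i : ℕ)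
    (hsub : ∀ j, i + m < j → Subsingleton (X j)) :
    HasChi τ m (LinearMap.range (d i)) (∑ j ∈ Finset.range m, (-1 : ℤ) ^ j • a (i + 1 + j)) := by
  induction m generalizing i with
  | zero =>
    have := hsub (i + 1) (by simp)
    have := (d i).surjective_rangeRestrict.subsingleton
    exact HasRank.zero
  | succ m ih =>
    refine ⟨X (i + 1), _, _, (d i).rangeRestrict, a (i + 1),
      (d i).surjective_rangeRestrict, hX (i + 1), ?_⟩
    rw [LinearMap.ker_rangeRestrict, LinearMap.exact_iff.1 (hd i),
      sum_range_succ_neg_one_pow_smul fun j => a (i + 1 + j), add_zero, sub_sub_cancel]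
    simpa only [add_comm, add_left_comm] using ih (i + 1) fun j hj => hsub j (by omega)

theorem HasChi.of_projectiveResolution {Z : ModuleCat.{u} R} (P : ProjectiveResolution Z)
    {a : ℕ → T} (hP : ∀ i, HasRank τ (P.complex.X i) (a i)) {n : ℕ}
    (hsub : ∀ i, n < i → Subsingleton (P.complex.X i)) :
    HasChi τ (n + 1) Z (∑ i ∈ Finset.range (n + 1), (-1 : ℤ) ^ i • a i) := by
  have hd : ∀ i, Function.Exact (P.complex.d (i + 1 + 1) (i + 1)).hom (P.complex.d (i + 1) i).hom :=
    fun i => (ShortComplex.ShortExact.moduleCat_exact_iff_function_exact _).1 (P.exact_succ i)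
  let π : P.complex.X 0 →ₗ[R] Z := (P.π.f 0).hom
  have hπ : Function.Exact (P.complex.d 1 0).hom π :=
    (ShortComplex.ShortExact.moduleCat_exact_iff_function_exact _).1 P.exact₀
  refine ⟨P.complex.X 0, _, _, π, a 0,
    (ModuleCat.epi_iff_surjective _).1 inferInstance, hP 0, ?_⟩
  rw [LinearMap.exact_iff.1 hπ, sum_range_succ_neg_one_pow_smul, sub_sub_cancel]
  simpa only [zero_add, add_comm] using HasChi.range_of_exact (X := fun i => P.complex.X i) hP
    (fun i => (P.complex.d (i + 1) i).hom) hd n 0 fun j hj => hsub j (by omega)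

theorem HasFreeResOfRanks.hasChi {G : Type} [Group G] {n : ℕ} {r : ℕ → ℕ}
    (h : HasFreeResOfRanks G n r) (c : ℤ →+ T) :
    HasChi (kaplanskyTrace c G) (n + 1) (TrivialModule ℤ G)
      (∑ i ∈ Finset.range (n + 1), (-1 : ℤ) ^ i • r i • c 1) := by
  obtain ⟨P, hP, hr⟩ := h
  have hX : ∀ i, HasRank (kaplanskyTrace c G) (P.complex.X i) (r i • c 1) := fun i => by
    obtain ⟨e⟩ := hP i
    simpa [kaplanskyTrace_apply] using (HasRank.free (τ := kaplanskyTrace c G) (r i)).congr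
      (e.trans (Finsupp.linearEquivFunOnFinite _ _ _)).symm
  refine HasChi.of_projectiveResolution P hX fun i hi => ?_
  obtain ⟨e⟩ := hP i
  rw [hr i hi] at e
  exact e.toEquiv.subsingleton

end Resolution

section PermModule

/-- The permutation module of a `G`-set `X` over the group ring `k[G]`. -/
abbrev PermModule (k G X : Type*) [CommRing k] [Group G] [MulAction G X] : Type _ :=
  (Representation.ofMulAction k G X).asModule

variable {k G X : Type*} [CommRing k] [Group G] [MulAction G X]

variable (k G X) in
/-- The basis of a permutation module that consists of the points of the `G`-set. -/
noncomputable def pointBasis : Module.Basis X k (PermModule k G X) :=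
  .ofRepr ((Representation.asModuleEquiv _).trans (MonoidAlgebra.coeffLinearEquiv k))

theorem single_smul_pointBasis (g : G) (a : k) (x : X) :
    MonoidAlgebra.single g a • pointBasis k G X x = a • pointBasis k G X (g • x) :=
  (Representation.single_smul _ a g _).trans
    (congrArg (a • ·) (Representation.ofMulAction_single g x 1))

/-- The linear extension of an equivariant map from a `G`-set to a module. -/
noncomputable def permLift {N : Type*} [AddCommGroup N] [Module k N] [Module (MonoidAlgebra k G) N]
    [IsScalarTower k (MonoidAlgebra k G) N] (v : X → N)
    (hv : ∀ (g : G) x, MonoidAlgebra.single g (1 : k) • v x = v (g • x)) :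
    PermModule k G X →ₗ[MonoidAlgebra k G] N :=
  MonoidAlgebra.equivariantOfLinearOfComm ((pointBasis k G X).constr k v) fun g =>
    let c := (pointBasis k G X).constr k v
    let a := MonoidAlgebra.single g (1 : k)
    have h : c ∘ₗ Algebra.lsmul k k _ a = Algebra.lsmul k k N a ∘ₗ c :=
      (pointBasis k G X).ext fun x => by
        change c (a • pointBasis k G X x) = a • c (pointBasis k G X x)
        rw [single_smul_pointBasis, one_smul, Module.Basis.constr_basis,
          Module.Basis.constr_basis, hv]
    DFunLike.congr_fun h

theorem permLift_pointBasis {N : Type*} [AddCommGroup N] [Module k N]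
    [Module (MonoidAlgebra k G) N] [IsScalarTower k (MonoidAlgebra k G) N] (v : X → N)
    (hv : ∀ (g : G) x, MonoidAlgebra.single g (1 : k) • v x = v (g • x)) (x : X) :
    permLift v hv (pointBasis k G X x) = v x :=
  (pointBasis k G X).constr_basis k v x

variable (k G X) in
/-- The augmentation of a permutation module. -/
noncomputable def augmentation : PermModule k G X →ₗ[MonoidAlgebra k G] TrivialModule k G :=
  permLift (fun _ => (show TrivialModule k G from (1 : k))) fun g _ =>
    (single_smul_trivialModule g 1 _).trans (one_smul k _)

theorem augmentation_pointBasis (x : X) : augmentation k G X (pointBasis k G X x) = (1 : k) :=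
  permLift_pointBasis ..

theorem exists_augmentation_section [Fintype X] (hX : IsUnit (Fintype.card X : k)) :
    ∃ i : TrivialModule k G →ₗ[MonoidAlgebra k G] PermModule k G X,
      ∀ a, augmentation k G X (i a) = a := by
  obtain ⟨u, hu⟩ := hX.exists_left_inv
  let aug := augmentation k G X
  let avg := u • ∑ x, pointBasis k G X x
  have havg : ∀ g : G, MonoidAlgebra.single g (1 : k) • avg = avg := fun g => by
    rw [smul_comm, Finset.smul_sum]
    simp only [single_smul_pointBasis, one_smul]
    rw [(MulAction.bijective g).sum_comp (pointBasis k G X)]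
  have h_card : u • ∑ _ : X, (1 : k) = 1 := by simpa using hu
  have h_aug : aug avg = (1 : k) := by
    rw [aug.map_smul_of_tower, map_sum, Finset.sum_congr rfl fun x _ => augmentation_pointBasis x]
    exact h_card
  let e := (Representation.trivial k G k).asModuleEquiv
  refine ⟨MonoidAlgebra.equivariantOfLinearOfComm
    (LinearMap.toSpanSingleton k _ avg ∘ₗ e.toLinearMap) fun g m => ?_, fun a => ?_⟩
  · change e (MonoidAlgebra.single g (1 : k) • m) • avg = MonoidAlgebra.single g (1 : k) • e m • avg
    rw [smul_comm (MonoidAlgebra.single g (1 : k)), havg, single_smul_trivialModule, one_smul]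
  · change aug (e a • avg) = a
    rw [aug.map_smul_of_tower, h_aug]
    exact mul_one (e a)

variable {Λ Γ : Type*} [Group Λ] [Group Γ]

variable (k) in
/-- The basis vector of the permutation module of `Γ ⧸ K` given by the left coset of `x`. -/
noncomputable abbrev cosetPoint (K : Subgroup Γ) (x : Γ) : PermModule k Γ (Γ ⧸ K) :=
  pointBasis k Γ (Γ ⧸ K) x

theorem single_smul_cosetPoint (K : Subgroup Γ) (g : Γ) (a : k) (x : Γ) :
    MonoidAlgebra.single g a • cosetPoint k K x = a • cosetPoint k K (g * x) :=
  single_smul_pointBasis g a (x : Γ ⧸ K)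

theorem cosetPoint_mul_of_mem {K : Subgroup Γ} {y : Γ} (hy : y ∈ K) (x : Γ) :
    cosetPoint k K (x * y) = cosetPoint k K x :=
  congrArg (pointBasis k Γ (Γ ⧸ K)) (QuotientGroup.mk_mul_of_mem x hy)

variable (k) in
/-- The semilinear map that sends `1` to the trivial coset. -/
noncomputable def trivialCosetMap (j : Λ →* Γ) :
    TrivialModule k Λ →ₛₗ[MonoidAlgebra.mapDomainRingHom k j] PermModule k Γ (Γ ⧸ j.range) :=
  semilinearOfSingle _ (LinearMap.toSpanSingleton k _ (cosetPoint k j.range 1) ∘ₗ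
    (Representation.trivial k Λ k).asModuleEquiv.toLinearMap).toAddMonoidHom fun l a m => by
    let e := (Representation.trivial k Λ k).asModuleEquiv
    let x := cosetPoint k j.range 1
    have hl : cosetPoint k j.range (j l * 1) = x := by
      rw [mul_one, ← one_mul (j l), cosetPoint_mul_of_mem (K := j.range) ⟨l, rfl⟩]
    change e (MonoidAlgebra.single l a • m) • x = MonoidAlgebra.mapDomain j _ • e m • x
    rw [MonoidAlgebra.mapDomain_single, smul_comm, single_smul_cosetPoint, hl, smul_smul,
      single_smul_trivialModule, map_smul, smul_eq_mul, mul_comm]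

theorem single_smul_trivialCosetMap (j : Λ →* Γ) (g : Γ) (m : TrivialModule k Λ) :
    MonoidAlgebra.single g (1 : k) • trivialCosetMap k j m =
      (Representation.trivial k Λ k).asModuleEquiv m • cosetPoint k j.range g := by
  let e := (Representation.trivial k Λ k).asModuleEquiv
  change MonoidAlgebra.single g (1 : k) • e m • cosetPoint k j.range 1 = _
  rw [smul_comm, single_smul_cosetPoint, mul_one, one_smul]

theorem isExtension_trivialCosetMap (j : Λ →* Γ) :
    IsExtension (cosetFamily k j) (trivialCosetMap k j) where
  span_range := by
    let W := Submodule.span (MonoidAlgebra k Γ) (Set.range (trivialCosetMap k j))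
    have hW : Set.range (pointBasis k Γ (Γ ⧸ j.range)) ⊆ W.restrictScalars k := by
      rintro _ ⟨t, rfl⟩
      obtain ⟨g, rfl⟩ := QuotientGroup.mk_surjective t
      have h := single_smul_trivialCosetMap (k := k) j g
        ((Representation.trivial k Λ k).asModuleEquiv.symm 1)
      rw [LinearEquiv.apply_symm_apply, one_smul] at h
      have hmem : cosetPoint k j.range g ∈ W :=
        h ▸ W.smul_mem _ (Submodule.subset_span ⟨_, rfl⟩)
      exact hmem
    refine eq_top_iff.2 fun n _ => Submodule.span_le.2 hW ?_
    exact (pointBasis k Γ (Γ ⧸ j.range)).mem_span n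
  eq_zero A m hm := by
    simp only [cosetFamily, single_smul_trivialCosetMap, cosetPoint, QuotientGroup.out_eq'] at hm
    exact funext (Fintype.linearIndependent_iff.1
      ((pointBasis k Γ (Γ ⧸ j.range)).linearIndependent.comp _ Subtype.val_injective) _ hm)

theorem HasChi.cosets {k Λ Γ : Type u} [CommRing k] [Group Λ] [Group Γ] {T : Type*}
    [AddCommGroup T] {c : k →+ T} {j : Λ →* Γ} (hj : Function.Injective j) {n : ℕ} {q : T}
    (h : HasChi (kaplanskyTrace c Λ) n (TrivialModule k Λ) q) :
    HasChi (kaplanskyTrace c Γ) n (PermModule k Γ (Γ ⧸ j.range)) q :=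
  h.baseChange (kaplanskyTrace_mul_comm c) (isRightCover_cosetFamily hj)
    (isExtension_mapDomainRingHom hj) (kaplanskyTrace_mapDomainRingHom hj c)
    (isExtension_trivialCosetMap j)

variable (k) in
/-- The identity of `k`, as a semilinear map between the trivial modules of two groups. -/
noncomputable def trivialRestrict (j : Λ →* Γ) :
    TrivialModule k Λ →ₛₗ[MonoidAlgebra.mapDomainRingHom k j] TrivialModule k Γ :=
  semilinearOfSingle _ (AddMonoidHom.id k) fun l a m => by
    let m' : TrivialModule k Γ := (Representation.trivial k Λ k).asModuleEquiv m
    have hl : MonoidAlgebra.mapDomainRingHom k j (.single l a) • m' = a • m' := by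
      rw [MonoidAlgebra.mapDomainRingHom_apply, MonoidAlgebra.mapDomain_single,
        single_smul_trivialModule]
    exact (single_smul_trivialModule l a m).trans hl.symm

end PermModule

section RationalEulerChar

/-- The trivial `ℚ[G]`-module has a finite projective resolution with Euler characteristic `q`,
where the ranks are measured by the Kaplansky trace. -/
def HasRatChi (G : Type) [Group G] (q : ℚ) : Prop :=
  ∃ n, HasChi (kaplanskyTrace (AddMonoidHom.id ℚ) G) n (TrivialModule ℚ G) q

variable {Λ Γ : Type} [Group Λ] [Group Γ] {j : Λ →* Γ} {q : ℚ}

theorem HasRatChi.restrict (hj : Function.Injective j) (hi : j.range.index ≠ 0)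
    (h : HasRatChi Γ q) : HasRatChi Λ (j.range.index * q) := by
  obtain ⟨n, h⟩ := h
  have := Subgroup.fintypeOfIndexNeZero hi
  let : Module (MonoidAlgebra ℚ Λ) (TrivialModule ℚ Γ) :=
    Module.compHom _ (MonoidAlgebra.mapDomainRingHom ℚ j)
  let e : TrivialModule ℚ Λ ≃ₗ[MonoidAlgebra ℚ Λ] TrivialModule ℚ Γ :=
    { AddEquiv.refl ℚ with map_smul' := (trivialRestrict ℚ j).map_smulₛₗ }
  rw [Subgroup.index_eq_card, Nat.card_eq_fintype_card, ← nsmul_eq_mul]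
  exact ⟨n, (h.restrict (isTracedBasis_mapDomainRingHom hj _) fun _ _ => rfl).congr e.symm⟩

theorem HasRatChi.of_restrict (hj : Function.Injective j) (hi : j.range.index ≠ 0)
    (h : HasRatChi Λ q) : HasRatChi Γ (q / j.range.index) := by
  obtain ⟨n, hn⟩ := h
  have := Subgroup.fintypeOfIndexNeZero hi
  have hcard : IsUnit (Fintype.card (Γ ⧸ j.range) : ℚ) := by simp
  obtain ⟨s, hs⟩ := exists_augmentation_section (k := ℚ) (G := Γ) hcard
  obtain ⟨q', hq'⟩ := (hn.cosets hj).of_retract s _ hs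
  have hΓ : HasRatChi Γ q' := ⟨n, hq'⟩
  obtain ⟨m, hm⟩ := hΓ.restrict hj hi
  have hq : q = j.range.index * q' := hn.unique (kaplanskyTrace_mul_comm _) hm
  rwa [hq, mul_div_cancel_left₀ _ (Nat.cast_ne_zero.2 hi)]

theorem HasFreeResOfRanks.hasRatChi {n : ℕ} {r : ℕ → ℕ} (h : HasFreeResOfRanks Γ n r) :
    HasRatChi Γ (∑ i ∈ Finset.range (n + 1), (-1 : ℚ) ^ i * r i) := by
  have hQ := (h.hasChi (Int.castAddHom ℚ)).baseChange (τ := kaplanskyTrace (.id ℚ) Γ)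
    (kaplanskyTrace_mul_comm _)
    isRightCover_denominatorFamily isExtension_mapRingHom (fun s => by simp [kaplanskyTrace_apply])
    (isExtension_trivialAlgebraMap (K := ℚ))
  exact ⟨n + 1, by simpa using hQ⟩

theorem EulerCharRel.hasRatChi (h : EulerCharRel Γ q) : HasRatChi Γ q := by
  obtain ⟨K, n, r, hK, h, rfl⟩ := h
  have hi : K.subtype.range.index ≠ 0 := by rwa [Subgroup.range_subtype]
  simpa only [Subgroup.range_subtype] using h.hasRatChi.of_restrict K.subtype_injective hi

end RationalEulerChar

section CosetModules

variable {k G V : Type*} [CommRing k] [Group G] [AddCommGroup V] [Module k V] {K L M : Subgroup G}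

theorem cosetPoint_hom_ext {s t : PermModule k G (G ⧸ L) →ₗ[k] V}
    (h : ∀ x, s (cosetPoint k L x) = t (cosetPoint k L x)) : s = t :=
  (pointBasis k G (G ⧸ L)).ext fun x => Quotient.inductionOn' x h

theorem exists_cosetPoint_eq {v : G → V} (hv : ∀ x, ∀ y ∈ L, v (x * y) = v x) :
    ∃ s : PermModule k G (G ⧸ L) →ₗ[k] V, ∀ x, s (cosetPoint k L x) = v x := by
  let v' : G ⧸ L → V := Quotient.lift v fun x y hxy => by
    rw [← mul_inv_cancel_left x y, hv x _ (QuotientGroup.leftRel_apply.1 hxy)]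
  exact ⟨(pointBasis k G (G ⧸ L)).constr k v', fun x => Module.Basis.constr_basis ..⟩

variable (k) in
/-- The map of permutation modules induced by the projection `G ⧸ K → G ⧸ L`. -/
noncomputable def cosetMap (hL : K ≤ L) :
    PermModule k G (G ⧸ K) →ₗ[MonoidAlgebra k G] PermModule k G (G ⧸ L) :=
  permLift (fun t => pointBasis k G (G ⧸ L) (Subgroup.quotientMapOfLE hL t)) fun g t => by
    induction t using QuotientGroup.induction_on with
    | H x => exact (single_smul_cosetPoint L g 1 x).trans (one_smul k _)

theorem cosetMap_cosetPoint (hL : K ≤ L) (x : G) :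
    cosetMap k hL (cosetPoint k K x) = cosetPoint k L x :=
  permLift_pointBasis ..

variable (k) in
/-- The map that sends a coset of `K` to the pair of the cosets of `L` and `M` that contain it. -/
noncomputable def cosetDiagonal (hL : K ≤ L) (hM : K ≤ M) :
    PermModule k G (G ⧸ K) →ₗ[MonoidAlgebra k G]
      PermModule k G (G ⧸ L) × PermModule k G (G ⧸ M) :=
  (cosetMap k hL).prod (cosetMap k hM)

theorem cosetDiagonal_cosetPoint (hL : K ≤ L) (hM : K ≤ M) (x : G) :
    cosetDiagonal k hL hM (cosetPoint k K x) = (cosetPoint k L x, cosetPoint k M x) :=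
  Prod.ext (cosetMap_cosetPoint hL x) (cosetMap_cosetPoint hM x)

variable (k G) in
/-- The difference of the augmentations of two permutation modules. -/
noncomputable def augmentationSub (X Y : Type*) [MulAction G X] [MulAction G Y] :
    PermModule k G X × PermModule k G Y →ₗ[MonoidAlgebra k G] TrivialModule k G :=
  (augmentation k G X).coprod (-augmentation k G Y)

theorem augmentationSub_apply {X Y : Type*} [MulAction G X] [MulAction G Y]
    (y : PermModule k G X × PermModule k G Y) :
    augmentationSub k G X Y y = augmentation k G X y.1 - augmentation k G Y y.2 :=
  (sub_eq_add_neg _ _).symm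

theorem exists_contraction (hL : K ≤ L) (hM : K ≤ M) {D : G → PermModule k G (G ⧸ K)}
    (hDL : ∀ x, ∀ y ∈ L, D (x * y) = D x + (cosetPoint k K (x * y) - cosetPoint k K x))
    (hDM : ∀ x, ∀ y ∈ M, D (x * y) = D x)
    (hD : ∀ x, cosetDiagonal k hL hM (D x) = (0, cosetPoint k M x - cosetPoint k M 1)) :
    ∃ (s : PermModule k G (G ⧸ L) × PermModule k G (G ⧸ M) →ₗ[k] PermModule k G (G ⧸ K))
      (t : TrivialModule k G →ₗ[k] PermModule k G (G ⧸ L) × PermModule k G (G ⧸ M)),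
      s ∘ₗ (cosetDiagonal k hL hM).restrictScalars k = LinearMap.id ∧
        (cosetDiagonal k hL hM).restrictScalars k ∘ₗ s +
          t ∘ₗ (augmentationSub k G (G ⧸ L) (G ⧸ M)).restrictScalars k = LinearMap.id := by
  obtain ⟨sL, hsL⟩ := exists_cosetPoint_eq (k := k) (L := L) (v := fun x => cosetPoint k K x - D x)
    fun x y hy => by rw [hDL x y hy]; abel
  obtain ⟨sM, hsM⟩ := exists_cosetPoint_eq (k := k) hDM
  let t := LinearMap.toSpanSingleton k _
    ((0, -cosetPoint k M 1) : PermModule k G (G ⧸ L) × PermModule k G (G ⧸ M)) ∘ₗ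
      (Representation.trivial k G k).asModuleEquiv.toLinearMap
  have h_diag := cosetDiagonal_cosetPoint (k := k) hL hM
  have h_one (x : G) :
      augmentationSub k G (G ⧸ L) (G ⧸ M) (cosetPoint k L x, 0) = (1 : k) := by
    rw [augmentationSub_apply, map_zero, sub_zero, augmentation_pointBasis]
  have h_neg (x : G) :
      augmentationSub k G (G ⧸ L) (G ⧸ M) (0, cosetPoint k M x) = (-1 : k) := by
    rw [augmentationSub_apply, map_zero, augmentation_pointBasis]
    exact zero_sub (1 : k)
  have ht (a : k) : t a = a • (0, -cosetPoint k M 1) := rfl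
  refine ⟨sL.coprod sM, t, cosetPoint_hom_ext fun x => ?_,
    LinearMap.prod_ext (cosetPoint_hom_ext fun x => ?_) (cosetPoint_hom_ext fun x => ?_)⟩
  · change sL.coprod sM (cosetDiagonal k hL hM (cosetPoint k K x)) = cosetPoint k K x
    rw [h_diag, LinearMap.coprod_apply, hsL, hsM, sub_add_cancel]
  · change cosetDiagonal k hL hM (sL.coprod sM (cosetPoint k L x, 0)) +
      t (augmentationSub k G (G ⧸ L) (G ⧸ M) (cosetPoint k L x, 0)) = (cosetPoint k L x, 0)
    rw [h_one, ht, LinearMap.coprod_apply, map_zero, add_zero, hsL, map_sub, h_diag, hD]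
    simp
  · change cosetDiagonal k hL hM (sL.coprod sM (0, cosetPoint k M x)) +
      t (augmentationSub k G (G ⧸ L) (G ⧸ M) (0, cosetPoint k M x)) = (0, cosetPoint k M x)
    rw [h_neg, ht, LinearMap.coprod_apply, map_zero, zero_add, hsM, hD]
    simp

theorem isShortExact_cosetDiagonal_of_path (hL : K ≤ L) (hM : K ≤ M)
    {D : G → PermModule k G (G ⧸ K)}
    (hDL : ∀ x, ∀ y ∈ L, D (x * y) = D x + (cosetPoint k K (x * y) - cosetPoint k K x))
    (hDM : ∀ x, ∀ y ∈ M, D (x * y) = D x)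
    (hD : ∀ x, cosetDiagonal k hL hM (D x) = (0, cosetPoint k M x - cosetPoint k M 1)) :
    IsShortExact (cosetDiagonal k hL hM) (augmentationSub k G (G ⧸ L) (G ⧸ M)) := by
  obtain ⟨s, t, hs, hst⟩ := exists_contraction hL hM hDL hDM hD
  let aug := augmentationSub k G (G ⧸ L) (G ⧸ M)
  have h_comp : aug.restrictScalars k ∘ₗ (cosetDiagonal k hL hM).restrictScalars k = 0 :=
    cosetPoint_hom_ext fun x => by
      change aug (cosetDiagonal k hL hM (cosetPoint k K x)) = 0
      rw [cosetDiagonal_cosetPoint, augmentationSub_apply, augmentation_pointBasis,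
        augmentation_pointBasis]
      exact sub_self (1 : k)
  refine ⟨Function.LeftInverse.injective (DFunLike.congr_fun hs), fun a => ?_, fun y => ⟨?_, ?_⟩⟩
  · refine ⟨((show k from a) • cosetPoint k L 1, 0), ?_⟩
    rw [augmentationSub_apply, map_zero, sub_zero, LinearMap.map_smul_of_tower,
      augmentation_pointBasis]
    exact mul_one (show k from a)
  · intro hy
    have h := DFunLike.congr_fun hst y
    change cosetDiagonal k hL hM (s y) + t (aug y) = y at h
    rw [hy, map_zero, add_zero] at h
    exact ⟨s y, h⟩
  · rintro ⟨z, rfl⟩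
    exact DFunLike.congr_fun h_comp z

end CosetModules

section MayerVietoris

variable {C A B G : Type} [Group C] [Group A] [Group B] [Group G]
  {f : C →* A} {g : C →* B} {iA : A →* G} {iB : B →* G}

theorem IsAmalgamatedProduct.sup_range_eq_top (h : IsAmalgamatedProduct f g iA iB) :
    iA.range ⊔ iB.range = ⊤ := by
  let S := iA.range ⊔ iB.range
  have hA : ∀ a, iA a ∈ S := fun a => Subgroup.mem_sup_left ⟨a, rfl⟩
  have hB : ∀ b, iB b ∈ S := fun b => Subgroup.mem_sup_right ⟨b, rfl⟩
  obtain ⟨k, ⟨hkA, hkB⟩, -⟩ := h.2 S inferInstance (iA.codRestrict S hA) (iB.codRestrict S hB)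
    (MonoidHom.ext fun c => Subtype.ext (DFunLike.congr_fun h.1 c))
  have hk := (h.2 G inferInstance iA iB h.1).unique (y₁ := S.subtype.comp k)
    (y₂ := MonoidHom.id G)
    ⟨by rw [MonoidHom.comp_assoc, hkA]; rfl, by rw [MonoidHom.comp_assoc, hkB]; rfl⟩ ⟨rfl, rfl⟩
  rw [eq_top_iff]
  intro x _
  rw [← show S.subtype (k x) = x from DFunLike.congr_fun hk x]
  exact (k x).2

theorem IsAmalgamatedProduct.induction_right (h : IsAmalgamatedProduct f g iA iB) {p : G → Prop}
    (one : p 1) (mulA : ∀ x a, p x → p (x * iA a)) (mulB : ∀ x b, p x → p (x * iB b)) (x : G) :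
    p x := by
  have hx : x ∈ Subgroup.closure ((iA.range : Set G) ∪ iB.range) := by
    rw [← Subgroup.sup_eq_closure, h.sup_range_eq_top]
    trivial
  have mul : ∀ x, ∀ y ∈ (iA.range : Set G) ∪ iB.range, p x → p (x * y) := by
    rintro x _ (⟨a, rfl⟩ | ⟨b, rfl⟩)
    exacts [mulA x a, mulB x b]
  induction hx using Subgroup.closure_induction_right with
  | one => exact one
  | mul_right x _ y hy hx => exact mul x y hy hx
  | mul_inv_cancel x _ y hy hx => exact mul x _ (hy.imp iA.range.inv_mem iB.range.inv_mem) hx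

theorem IsAmalgamatedProduct.injective (h : IsAmalgamatedProduct f g iA iB)
    (hf : Function.Injective f) (hg : Function.Injective g) :
    Function.Injective iA ∧ Function.Injective iB := by
  let X : Bool → Type := fun i => cond i A B
  let _ : ∀ i, Group (X i) := fun i => match i with
    | true => ‹Group A›
    | false => ‹Group B›
  let φ : ∀ i, C →* X i := fun i => match i with
    | true => f
    | false => g
  have hφ : ∀ i, Function.Injective (φ i) := fun i => match i with
    | true => hf
    | false => hg
  obtain ⟨k, ⟨hkA, hkB⟩, -⟩ := h.2 (Monoid.PushoutI φ) inferInstance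
    (Monoid.PushoutI.of (φ := φ) true) (Monoid.PushoutI.of (φ := φ) false)
    ((Monoid.PushoutI.of_comp_eq_base (φ := φ) true).trans
     (Monoid.PushoutI.of_comp_eq_base (φ := φ) false).symm)
  constructor
  · refine Function.Injective.of_comp (f := k) ?_
    rw [← MonoidHom.coe_comp, hkA]
    exact Monoid.PushoutI.of_injective hφ true
  · refine Function.Injective.of_comp (f := k) ?_
    rw [← MonoidHom.coe_comp, hkB]
    exact Monoid.PushoutI.of_injective hφ false

theorem IsAmalgamatedProduct.exists_isCocycle₁ (h : IsAmalgamatedProduct f g iA iB) {V : Type}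
    [AddCommGroup V] [DistribMulAction G V] {dA : A → V} {dB : B → V}
    (hA : ∀ x y, dA (x * y) = iA x • dA y + dA x) (hB : ∀ x y, dB (x * y) = iB x • dB y + dB x)
    (hC : ∀ c, dA (f c) = dB (g c)) :
    ∃ D : G → V, groupCohomology.IsCocycle₁ D ∧ (∀ a, D (iA a) = dA a) ∧ ∀ b, D (iB b) = dB b := by
  let φ : G →* MulAut (Multiplicative V) :=
    (MulAutMultiplicative V).symm.toMonoidHom.comp (DistribMulAction.toAddAut G V)
  let kA : A →* Multiplicative V ⋊[φ] G := .mk' (fun a => ⟨.ofAdd (dA a), iA a⟩) fun x y =>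
    SemidirectProduct.ext (congrArg Multiplicative.ofAdd ((hA x y).trans (add_comm _ _)))
      (map_mul iA x y)
  let kB : B →* Multiplicative V ⋊[φ] G := .mk' (fun b => ⟨.ofAdd (dB b), iB b⟩) fun x y =>
    SemidirectProduct.ext (congrArg Multiplicative.ofAdd ((hB x y).trans (add_comm _ _)))
      (map_mul iB x y)
  obtain ⟨k, ⟨hkA, hkB⟩, -⟩ := h.2 _ inferInstance kA kB <| MonoidHom.ext fun c =>
    SemidirectProduct.ext (congrArg Multiplicative.ofAdd (hC c)) (DFunLike.congr_fun h.1 c)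
  have hk : SemidirectProduct.rightHom.comp k = MonoidHom.id G :=
    (h.2 G inferInstance iA iB h.1).unique
      ⟨by rw [MonoidHom.comp_assoc, hkA]; rfl, by rw [MonoidHom.comp_assoc, hkB]; rfl⟩ ⟨rfl, rfl⟩
  refine ⟨fun x => (k x).left.toAdd, fun x y => ?_, fun a => ?_, fun b => ?_⟩
  · have hx : (k x).right = x := DFunLike.congr_fun hk x
    have hxy : (k (x * y)).left = (k x).left * φ x (k y).left := by
      rw [map_mul, SemidirectProduct.mul_left, hx]
    exact (congrArg Multiplicative.toAdd hxy).trans (add_comm _ _)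
  · exact congrArg (fun z => z.left.toAdd) (DFunLike.congr_fun hkA a)
  · exact congrArg (fun z => z.left.toAdd) (DFunLike.congr_fun hkB b)

theorem IsAmalgamatedProduct.exists_path (h : IsAmalgamatedProduct f g iA iB) (k : Type)
    [CommRing k] {K : Subgroup G} (hK : (iA.comp f).range ≤ K) :
    ∃ D : G → PermModule k G (G ⧸ K), D 1 = 0 ∧
      (∀ x a, D (x * iA a) = D x + (cosetPoint k K (x * iA a) - cosetPoint k K x)) ∧
      ∀ x b, D (x * iB b) = D x := by
  let : DistribMulAction G (PermModule k G (G ⧸ K)) :=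
    DistribMulAction.compHom _ (MonoidAlgebra.of k G)
  have h_smul (x y : G) : x • cosetPoint k K y = cosetPoint k K (x * y) :=
    (single_smul_cosetPoint K x 1 y).trans (one_smul k _)
  obtain ⟨D, hD, hDA, hDB⟩ := h.exists_isCocycle₁
    (dA := fun a => cosetPoint k K (iA a) - cosetPoint k K 1) (dB := fun _ => 0)
    (fun x y => by rw [smul_sub, h_smul, h_smul, map_mul, mul_one]; abel)
    (fun x _ => by rw [smul_zero, add_zero])
    (fun c => sub_eq_zero.2 <| by
      rw [← cosetPoint_mul_of_mem (y := iA (f c)) (hK ⟨c, rfl⟩) 1, one_mul])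
  refine ⟨D, by simpa using hDB 1, fun x a => ?_, fun x b => ?_⟩
  · rw [hD, hDA, smul_sub, h_smul, h_smul, mul_one, add_comm]
  · rw [hD, hDB, smul_zero, zero_add]

theorem IsAmalgamatedProduct.isShortExact_cosetDiagonal (h : IsAmalgamatedProduct f g iA iB)
    (k : Type) [CommRing k] {K : Subgroup G} (hK : (iA.comp f).range ≤ K) (hA : K ≤ iA.range)
    (hB : K ≤ iB.range) :
    IsShortExact (cosetDiagonal k hA hB) (augmentationSub k G (G ⧸ iA.range) (G ⧸ iB.range)) := by
  obtain ⟨D, hD1, hDA, hDB⟩ := h.exists_path k hK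
  refine isShortExact_cosetDiagonal_of_path hA hB (D := D) (fun x => ?_) (fun x => ?_) fun x => ?_
  · rintro _ ⟨a, rfl⟩
    exact hDA x a
  · rintro _ ⟨b, rfl⟩
    exact hDB x b
  · induction x using h.induction_right with
    | one => rw [hD1, map_zero, sub_self]; rfl
    | mulA x a ih =>
      rw [hDA, map_add, map_sub, cosetDiagonal_cosetPoint, cosetDiagonal_cosetPoint, ih,
        cosetPoint_mul_of_mem (K := iA.range) ⟨a, rfl⟩]
      simp
    | mulB x b ih => rw [hDB, ih, cosetPoint_mul_of_mem (K := iB.range) ⟨b, rfl⟩]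

theorem IsAmalgamatedProduct.ratChi_eq (h : IsAmalgamatedProduct f g iA iB)
    (hf : Function.Injective f) (hg : Function.Injective g) {a b c q : ℚ} (hA : HasRatChi A a)
    (hB : HasRatChi B b) (hC : HasRatChi C c) (hG : HasRatChi G q) : q = a + b - c := by
  obtain ⟨⟨nA, hA⟩, ⟨nB, hB⟩, ⟨nC, hC⟩, ⟨nG, hG⟩⟩ := hA, hB, hC, hG
  obtain ⟨hiA, hiB⟩ := h.injective hf hg
  have hKA : (iA.comp f).range ≤ iA.range := by
    rw [MonoidHom.range_comp]
    exact Subgroup.map_le_range iA f.range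
  have hKB : (iA.comp f).range ≤ iB.range := by
    rw [h.1, MonoidHom.range_comp]
    exact Subgroup.map_le_range iB g.range
  have h_sum := ((hA.cosets hiA).mono (le_max_left nA nB)).prod
    ((hB.cosets hiB).mono (le_max_right nA nB))
  have h_ext := ((hC.cosets (j := iA.comp f) (hiA.comp hf)).mono
    (le_max_left nC nG)).of_isShortExact (hG.mono (le_max_right nC nG))
    (h.isShortExact_cosetDiagonal ℚ le_rfl hKA hKB)
  rw [eq_sub_iff_add_eq, add_comm, h_ext.unique (kaplanskyTrace_mul_comm _) h_sum]

end MayerVietoris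

theorem one_div_le_half {n : ℕ} (hn : 2 ≤ n) : 1 / (n : ℚ) ≤ 1 / 2 :=
  one_div_le_one_div_of_le two_pos (Nat.ofNat_le_cast.2 hn)

theorem one_div_add_one_div_eq_one_iff {m n : ℕ} (hm : 2 ≤ m) (hn : 2 ≤ n) :
    1 / (m : ℚ) + 1 / (n : ℚ) = 1 ↔ m = 2 ∧ n = 2 := by
  have h_half (l : ℕ) : 1 / (l : ℚ) = 1 / 2 ↔ l = 2 := by
    rw [one_div, one_div, inv_inj]
    norm_cast
  rw [← h_half m, ← h_half n, ← add_eq_add_iff_eq_and_eq (one_div_le_half hm) (one_div_le_half hn),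
    add_halves]

/-- Let `H` be a group of type `VFP` with `χ(H) = x ≠ 0`, and let `G = A *_C B` be a
reduced amalgam (`[A:C] ≥ 2`, `[B:C] ≥ 2`) in which `A`, `B`, `C` each contain `H`
(embedded via `h : H → C`) as a subgroup of finite index, and `G` is of type `VFP` with
`χ(G) = q`.  Then `χ(G)/χ(H) ≤ 0`, `χ(G) = 0` iff `[A:C] = [B:C] = 2`, and in fact
`χ(G) = (χ(H)/[C:H])·(1/[A:C] + 1/[B:C] − 1)`. -/
theorem eulerChar_reduced_amalgam (H C A B G : Type)
    [Group H] [Group C] [Group A] [Group B] [Group G]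
    (h : H →* C) (f : C →* A) (g : C →* B) (iA : A →* G) (iB : B →* G)
    (hh : Function.Injective h) (hf : Function.Injective f) (hg : Function.Injective g)
    (hpush : IsAmalgamatedProduct f g iA iB)
    (hCH : h.range.index ≠ 0)
    (hAH : ((f.comp h).range.index ≠ 0)) (hBH : ((g.comp h).range.index ≠ 0))
    (hred₁ : 2 ≤ f.range.index) (hred₂ : 2 ≤ g.range.index)
    (hHvfp : TypeVFP H) (hGvfp : TypeVFP G)
    (x q : ℚ) (hx : EulerCharRel H x) (hx0 : x ≠ 0) (hq : EulerCharRel G q) :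
    q / x ≤ 0 ∧ (q = 0 ↔ f.range.index = 2 ∧ g.range.index = 2) ∧
      q = (x / (h.range.index : ℚ)) *
        (1 / (f.range.index : ℚ) + 1 / (g.range.index : ℚ) - 1) := by
  have hC := hx.hasRatChi.of_restrict hh hCH
  have hA := hC.of_restrict hf (by omega)
  have hB := hC.of_restrict hg (by omega)
  have h_eq : q = x / h.range.index * (1 / f.range.index + 1 / g.range.index - 1) := by
    rw [hpush.ratChi_eq hf hg hA hB hC hq.hasRatChi]
    ring
  have h_fac : x / (h.range.index : ℚ) ≠ 0 := div_ne_zero hx0 (Nat.cast_ne_zero.2 hCH)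
  have h_le := add_le_add (one_div_le_half hred₁) (one_div_le_half hred₂)
  refine ⟨?_, ?_, h_eq⟩
  · rw [h_eq, mul_div_right_comm, div_right_comm, div_self hx0]
    exact mul_nonpos_of_nonneg_of_nonpos (by positivity) (by linarith)
  · rw [h_eq, mul_eq_zero, or_iff_right h_fac, sub_eq_zero,
      one_div_add_one_div_eq_one_iff hred₁ hred₂]
end
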